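/- arXiv:1207.3470 — 11 statements merged into one kernel-verified Lean document; each statement's English description precedes it below -/
import Mathlib

section
/- Let p ≥ 1 be an integer and let N₁ be the infinite integer matrix indexed by ℕ × ℕ defined by N₁(0,1) = p, N₁(1,0) = p + 1, N₁(i, i+1) = p for every i ≥ 1, N₁(i+1, i) = 1 for every i ≥ 1, and N₁(i,j) = 0 for all other pairs (i,j). If B : ℕ × ℕ → ℤ is a finitely supported matrix (B(i,j) = 0 for all but finitely many pairs (i,j)) satisfying ∑ₖ B(i,k)·N₁(k,j) = ∑ₖ N₁(i,k)·B(k,j) for all i, j ∈ ℕ (all these sums have only finitely many nonzero terms), then B = 0. -/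
/-! The subdiagonal of `N1 p` has nonzero entries and everything below it vanishes. If all rows of `B`
of index greater than `m` are zero, the commutation relation at `(m + 1, j)` therefore collapses to
`0 = N1 p (m + 1) m * B m j`, so row `m` vanishes too. Finite support provides a starting `m`, and
descending induction finishes the proof. -/

/-- The infinite integer matrix `N₁` : `N₁(0,1) = p`, `N₁(1,0) = p + 1`,
`N₁(i, i+1) = p` for `i ≥ 1`, `N₁(i+1, i) = 1` for `i ≥ 1` (i.e. rows `≥ 2`),
and `0` elsewhere. -/
def N1 (p : ℤ) : ℕ → ℕ → ℤ := fun i j =>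
  if i = 0 ∧ j = 1 then p
  else if i = 1 ∧ j = 0 then p + 1
  else if 1 ≤ i ∧ j = i + 1 then p
  else if 2 ≤ i ∧ i = j + 1 then 1
  else 0

lemma N1_succ_self_ne_zero (p : ℤ) (hp : 1 ≤ p) (m : ℕ) : N1 p (m + 1) m ≠ 0 := by
  unfold N1
  split_ifs <;> omega

lemma N1_below_subdiagonal (p : ℤ) {m k : ℕ} (h : k < m) : N1 p (m + 1) k = 0 := by
  unfold N1
  grind

theorem stmt_0 (p : ℤ) (hp : 1 ≤ p) (B : ℕ → ℕ → ℤ)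
    (hBfin : {ij : ℕ × ℕ | B ij.1 ij.2 ≠ 0}.Finite)
    (hcomm : ∀ i j : ℕ,
      ∑ᶠ k : ℕ, B i k * N1 p k j = ∑ᶠ k : ℕ, N1 p i k * B k j) :
    B = 0 := by
  have step : ∀ m : ℕ, (∀ i, m + 1 ≤ i → ∀ j, B i j = 0) → ∀ i, m ≤ i → ∀ j, B i j = 0 := by
    intro m h i hi j
    rcases Nat.lt_or_ge m i with hmi | him
    · exact h i hmi j
    obtain rfl : i = m := le_antisymm him hi
    have hc := hcomm (i + 1) j
    rw [finsum_eq_single (fun k => N1 p (i + 1) k * B k j) i] at hc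
    · simp only [h (i + 1) le_rfl, zero_mul, finsum_zero] at hc
      exact (mul_eq_zero.mp hc.symm).resolve_left (N1_succ_self_ne_zero p hp i)
    · intro k hk
      rcases Nat.lt_or_gt_of_ne hk with hk | hk
      · simp [N1_below_subdiagonal p hk]
      · simp [h k hk]
  have descend : ∀ m : ℕ, (∀ i, m ≤ i → ∀ j, B i j = 0) → ∀ i j, B i j = 0 := by
    intro m
    induction m with
    | zero => exact fun h i => h i (Nat.zero_le i)
    | succ m ih => exact fun h => ih (step m h)
  obtain ⟨M, hM⟩ := (hBfin.image Prod.fst).bddAbove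
  funext i j
  refine descend (M + 1) (fun i hi j => ?_) i j
  by_contra hne
  have : i ≤ M := hM ⟨(i, j), hne, rfl⟩
  omega
end

section
/- Let F be a finite field, let K be a field extension of F in which F is relatively algebraically closed (every element of K that is algebraic over F lies in the image of F), and let L be a finite field extension of F. Then the tensor product K ⊗_F L is a field. -/
/-!
By the primitive element theorem `L ≅ F[X]/(f)` with `f` monic irreducible (finite fields are
perfect), so `K ⊗ L ≅ K[X]/(f)`, and it suffices that `f` stays irreducible over `K`. A monic
factor of `f` in `K[X]` has coefficients integral over `F`, because its roots are among the roots
of `f`. By hypothesis these coefficients lie in `F`, so the factorization descends to `F[X]`.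
-/

open scoped TensorProduct

open Polynomial in
/-- Irreducibility is preserved when passing to an extension without new algebraic elements:
the coefficients of a monic factor are algebraic over `F`, hence lie in `F`. -/
theorem irreducible_map_of_relatively_algClosed {F K : Type*} [Field F] [Field K] [Algebra F K]
    (hconst : ∀ x : K, IsAlgebraic F x → x ∈ (algebraMap F K).range)
    {f : F[X]} (hm : f.Monic) (hf : Irreducible f) :
    Irreducible (f.map (algebraMap F K)) := by
  have hlift : ∀ g : K[X], g.Monic → g ∣ f.map (algebraMap F K) →
      ∃ g' : F[X], g'.map (algebraMap F K) = g ∧ g'.Monic := by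
    intro g hg hd
    have hl : g ∈ lifts (algebraMap F K) := (lifts_iff_coeff_lifts g).2 fun n ↦
      hconst _ (isIntegral_coeff_of_dvd f g hm hg hd n).isAlgebraic
    obtain ⟨g', h1, -, h2⟩ := lifts_and_natDegree_eq_and_monic hl hg
    exact ⟨g', h1, h2⟩
  refine (irreducible_of_monic (hm.map _) ?_).2 fun a b ha hb hab ↦ ?_
  · intro h
    have := congrArg natDegree h
    rw [natDegree_map, natDegree_one] at this
    exact hf.natDegree_pos.ne' this
  · obtain ⟨a', rfl, ha'⟩ := hlift a ha ⟨b, hab.symm⟩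
    obtain ⟨b', rfl, hb'⟩ := hlift b hb ⟨_, by rw [mul_comm, hab]⟩
    rw [← Polynomial.map_mul] at hab
    have hab' := map_injective _ (algebraMap F K).injective hab
    rcases (irreducible_of_monic hm hf.ne_one).1 hf a' b' ha' hb' hab' with h | h
    · left; simp [h]
    · right; simp [h]

theorem stmt_1 (F K L : Type*) [Field F] [Fintype F] [Field K] [Field L]
    [Algebra F K] [Algebra F L] [FiniteDimensional F L]
    (hconst : ∀ x : K, IsAlgebraic F x → x ∈ (algebraMap F K).range) :
    IsField (K ⊗[F] L) := by
  let pb := Field.powerBasisOfFiniteOfSeparable F L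
  have hint : IsIntegral F pb.gen := pb.isIntegral_gen
  have hirr := irreducible_map_of_relatively_algClosed hconst (minpoly.monic hint)
    (minpoly.irreducible hint)
  have : Fact (Irreducible ((minpoly F pb.gen).map (algebraMap F K))) := ⟨hirr⟩
  let e₁ : AdjoinRoot (minpoly F pb.gen) ≃ₐ[F] L := AdjoinRoot.equiv' _ pb (by simp) (by simp)
  let e₂ : K ⊗[F] L ≃ₐ[F] K ⊗[F] AdjoinRoot (minpoly F pb.gen) :=
    Algebra.TensorProduct.congr AlgEquiv.refl e₁.symm
  let e₃ := AdjoinRoot.tensorAlgEquiv (R := F) (T := K) (minpoly F pb.gen) _ rfl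
  let e₄ := AdjoinRoot.mapRingEquiv (Algebra.TensorProduct.rid F F K).toRingEquiv
    ((minpoly F pb.gen).map (Algebra.TensorProduct.includeRight : F →ₐ[F] K ⊗[F] F).toRingHom)
    ((minpoly F pb.gen).map (algebraMap F K)) (by
      refine .of_eq ?_
      rw [Polynomial.map_map]
      congr 1
      ext x
      simp [Algebra.algebraMap_eq_smul_one])
  exact (e₂.toRingEquiv.trans (e₃.toRingEquiv.trans e₄)).toMulEquiv.isField (Field.toIsField _)
end

section
/- Let F be a finite field, let K be a field extension of F in which F is relatively algebraically closed (every element of K that is algebraic over F lies in the image of F), and let n ≥ 1. Let B' be an F-subalgebra of the matrix algebra Mₙ(K) that is finite-dimensional over F and is a semisimple ring. Then the F-dimension of B' equals the K-dimension of the K-linear span of B' inside Mₙ(K): dim_F B' = dim_K (span_K B'). -/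
/-!
The point is that a suitable `F`-basis of `B'` stays linearly independent over `K`.

By Wedderburn–Artin, `B'` is a product of matrix algebras over division algebras `Dᵢ` that are
finite over `F`, hence finite, hence fields by Wedderburn's little theorem. As `F` is perfect,
`Dᵢ = F[α]` for some `α`, and the basis used consists of the elements `αᵏ E_{ab}` of the factors.
Multiplying a `K`-linear relation between them by matrix units on both sides isolates, for a
diagonal matrix unit `E_{aa}` of one factor, a relation `∑ cₖ αᵏ E_{aa} = 0`, so it is enough to
treat one (non-unital) copy of `Dᵢ` (`exists_basis_linearIndependent`).

There, the relation says that a polynomial `q` over `K` of degree less than that of the minimal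
polynomial `p` of `α` annihilates `E_{aa}`. Since `F` is relatively algebraically closed in `K`,
`p` remains irreducible over `K` (`irreducible_map_of_relAlgClosed`): monic factors of `p` over `K`
have coefficients integral over `F`. If `q ≠ 0`, then `q` and `p` are coprime and both annihilate
`E_{aa}`, so `E_{aa} = 0`, which contradicts `B' ⊆ Mₙ(K)`.
-/

open Polynomial Module

theorem irreducible_map_of_relAlgClosed {F K : Type*} [Field F] [Field K] [Algebra F K]
    (hconst : ∀ x : K, IsAlgebraic F x → x ∈ (algebraMap F K).range)
    {p : F[X]} (hp : p.Monic) (hirr : Irreducible p) :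
    Irreducible (p.map (algebraMap F K)) := by
  have hp1 : p ≠ 1 := fun h => hirr.not_isUnit (h ▸ isUnit_one)
  have hpK1 : p.map (algebraMap F K) ≠ 1 := fun h => hp1 <| by
    apply map_injective _ (algebraMap F K).injective
    simpa using h
  have key : ∀ f : K[X], f.Monic → f ∣ p.map (algebraMap F K) →
      ∃ f' : F[X], f'.Monic ∧ f'.map (algebraMap F K) = f := by
    intro f hf hd
    have h1 := integralClosure.mem_lifts_of_monic_of_dvd_map K hp hf hd
    have h2 : f ∈ lifts (algebraMap F K) := by
      rw [lifts_iff_coeff_lifts] at h1 ⊢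
      intro k
      obtain ⟨x, hx⟩ := h1 k
      rw [← hx]
      exact hconst _ (IsIntegral.isAlgebraic x.2)
    obtain ⟨f', hf', -, hm⟩ := lifts_and_degree_eq_and_monic h2 hf
    exact ⟨f', hm, hf'⟩
  rw [irreducible_of_monic (hp.map _) hpK1]
  intro f g hf hg hfg
  obtain ⟨f', hf'm, rfl⟩ := key f hf ⟨g, hfg.symm⟩
  obtain ⟨g', hg'm, rfl⟩ := key g hg ⟨_, by rw [mul_comm]; exact hfg.symm⟩
  rw [← Polynomial.map_mul] at hfg
  have hfg' := map_injective _ (algebraMap F K).injective hfg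
  rcases (irreducible_of_monic hp hp1).1 hirr f' g' hf'm hg'm hfg' with h | h
  · left; simp [h]
  · right; simp [h]

/-- The map `ψ` is a possibly non-unital homomorphism; `ψ 1` plays the role of the idempotent
`E_{aa}`. The basis is chosen independently of `ψ`. -/
theorem exists_basis_linearIndependent {F K : Type*} [Field F] [Finite F] [Field K] [Algebra F K]
    (hconst : ∀ x : K, IsAlgebraic F x → x ∈ (algebraMap F K).range)
    (R : Type*) [Ring R] [Algebra F R] [Algebra K R] [IsScalarTower F K R]
    (D : Type*) [DivisionRing D] [Algebra F D] [Module.Finite F D] :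
    ∃ (m : ℕ) (b : Basis (Fin m) F D), ∀ ψ : D →ₗ[F] R, (∀ x y, ψ (x * y) = ψ x * ψ y) →
      ψ 1 ≠ 0 → LinearIndependent K (fun k => ψ (b k)) := by
  have : Finite D := Module.finite_of_finite F
  let _ : Field D := littleWedderburn D
  let pb := Field.powerBasisOfFiniteOfSeparable F D
  refine ⟨pb.dim, pb.basis, fun ψ hψ h1 => ?_⟩
  rw [Fintype.linearIndependent_iff]
  intro c hc
  have hint : IsIntegral F pb.gen := .of_finite F _
  have hirr := irreducible_map_of_relAlgClosed hconst (minpoly.monic hint) (minpoly.irreducible hint)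
  have hpow : ∀ k : ℕ, ψ pb.gen ^ k * ψ 1 = ψ (pb.gen ^ k) := by
    intro k
    induction k with
    | zero => simp
    | succ k ih => rw [pow_succ', mul_assoc, ih, ← hψ, ← pow_succ']
  have hp : aeval (ψ pb.gen) ((minpoly F pb.gen).map (algebraMap F K)) * ψ 1 = 0 := by
    have : ∀ r : F[X], aeval (ψ pb.gen) r * ψ 1 = ψ (aeval pb.gen r) := by
      intro r
      rw [aeval_eq_sum_range, aeval_eq_sum_range, Finset.sum_mul, map_sum]
      refine Finset.sum_congr rfl fun k _ => ?_
      rw [smul_mul_assoc, hpow, map_smul]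
    rw [aeval_map_algebraMap, this, minpoly.aeval, map_zero]
  let q : K[X] := ∑ k : Fin pb.dim, C (c k) * X ^ (k : ℕ)
  have hq : aeval (ψ pb.gen) q * ψ 1 = 0 := by
    rw [← hc]
    simp only [q, map_sum, Finset.sum_mul, map_mul, aeval_C, map_pow, aeval_X, PowerBasis.coe_basis,
      ← hpow, Algebra.smul_def, mul_assoc]
  have hqc : ∀ k : Fin pb.dim, q.coeff k = c k := by
    intro k
    simp [q, coeff_X_pow, Fin.val_inj]
  have hdeg : q.degree < ((minpoly F pb.gen).map (algebraMap F K)).degree := by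
    rw [degree_map, degree_eq_natDegree (minpoly.ne_zero hint), pb.natDegree_minpoly]
    exact degree_sum_fin_lt c
  have hq0 : q = 0 := by
    by_contra hne
    have hcop : IsCoprime ((minpoly F pb.gen).map (algebraMap F K)) q :=
      hirr.coprime_iff_not_dvd.2 fun hd => absurd (degree_le_of_dvd hd hne) (not_le.2 hdeg)
    obtain ⟨u, v, huv⟩ := hcop
    apply h1
    have := congrArg (fun r => aeval (ψ pb.gen) r * ψ 1) huv
    simpa only [map_add, map_mul, map_one, one_mul, add_mul, mul_assoc, hp, hq, mul_zero, add_zero,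
      eq_comm] using this
  intro k
  rw [← hqc, hq0, coeff_zero]

theorem stmt_2 (F K : Type*) [Field F] [Fintype F] [Field K] [Algebra F K]
    (hconst : ∀ x : K, IsAlgebraic F x → x ∈ (algebraMap F K).range)
    (n : ℕ) (hn : 1 ≤ n)
    (B' : Subalgebra F (Matrix (Fin n) (Fin n) K))
    [FiniteDimensional F B'] [IsSemisimpleRing B'] :
    Module.finrank F B'
      = Module.finrank K
          (Submodule.span K (B' : Set (Matrix (Fin n) (Fin n) K))) := by
  classical
  obtain ⟨N, D, d, _, _, _, -, ⟨e⟩⟩ :=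
    IsSemisimpleRing.exists_algEquiv_pi_matrix_divisionRing_finite F B'
  choose m b hb using fun i =>
    exists_basis_linearIndependent hconst (Matrix (Fin n) (Fin n) K) (D i)
  let φ : (Π i, Matrix (Fin (d i)) (Fin (d i)) (D i)) →ₐ[F] Matrix (Fin n) (Fin n) K :=
    B'.val.comp e.symm.toAlgHom
  have hφ : Function.Injective φ := Subtype.val_injective.comp e.symm.injective
  let β := Pi.basis fun i => (b i).matrix (Fin (d i)) (Fin (d i))
  have hli : LinearIndependent K (fun j => φ (β j)) := by
    rw [Fintype.linearIndependent_iff]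
    rintro g hg ⟨i, s, t, k⟩
    let ψ : D i →ₗ[F] Matrix (Fin n) (Fin n) K :=
      φ.toLinearMap ∘ₗ LinearMap.single F _ i ∘ₗ Matrix.singleLinearMap F s s
    have hψ : ∀ x, ψ x = φ (Pi.single i (Matrix.single s s x)) := fun x => rfl
    have hψ1 : ψ 1 ≠ 0 := by
      rw [hψ, map_ne_zero_iff _ hφ, Ne, Pi.single_eq_zero_iff]
      intro h
      simpa using congrFun (congrFun h s) s
    have hψm : ∀ x y, ψ (x * y) = ψ x * ψ y := by
      intro x y
      rw [hψ, hψ, hψ, ← map_mul, ← Pi.single_mul, Matrix.single_mul_single_same]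
    refine Fintype.linearIndependent_iff.1 (hb i ψ hψm hψ1) (fun k => g ⟨i, s, t, k⟩) ?_ k
    -- Multiplying by `E_{ss}` on the left and `E_{ts}` on the right keeps only the `(s, t)` entries
    -- of the `i`-th factor, moved to position `(s, s)`.
    have h := congrArg (fun y => φ (Pi.single i (Matrix.single s s 1)) * y *
      φ (Pi.single i (Matrix.single t s 1))) hg
    simp only [Finset.mul_sum, Finset.sum_mul, mul_smul_comm, smul_mul_assoc, mul_zero, zero_mul,
      ← map_mul, β, Pi.basis_apply] at h
    rw [← h, Fintype.sum_sigma, Fintype.sum_eq_single i, Fintype.sum_prod_type,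
      Fintype.sum_eq_single s, Fintype.sum_prod_type, Fintype.sum_eq_single t]
    · refine Fintype.sum_congr _ _ fun k => ?_
      simp [hψ, ← Pi.single_mul]
    · intro t' ht
      refine Finset.sum_eq_zero fun k _ => ?_
      simp [← Pi.single_mul, ht]
    · intro s' hs
      refine Finset.sum_eq_zero fun ⟨t', k⟩ _ => ?_
      simp [← Pi.single_mul, hs.symm]
    · intro i' hi
      refine Finset.sum_eq_zero fun k _ => ?_
      have : (Pi.single i (Matrix.single s s 1) * Pi.single i' ((b i').matrix _ _ k) :
          Π i, Matrix (Fin (d i)) (Fin (d i)) (D i)) = 0 := by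
        ext1 j
        by_cases hj : j = i
        · subst hj; simp [hi.symm]
        · simp [hj]
      rw [this]; simp
  have hspan : Submodule.span K (B' : Set (Matrix (Fin n) (Fin n) K)) =
      Submodule.span K (Set.range fun j => φ (β j)) := by
    apply le_antisymm
    · rw [Submodule.span_le]
      intro x hx
      have hx' : x = φ (e ⟨x, hx⟩) := by simp [φ]
      rw [hx', ← β.sum_repr (e ⟨x, hx⟩), map_sum]
      refine Submodule.sum_mem _ fun j _ => ?_
      rw [map_smul, ← algebraMap_smul K]
      exact Submodule.smul_mem _ _ (Submodule.subset_span ⟨j, rfl⟩)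
    · apply Submodule.span_mono
      rintro _ ⟨j, rfl⟩
      exact (e.symm (β j)).2
  rw [hspan, finrank_span_eq_card hli, e.toLinearEquiv.finrank_eq, finrank_eq_card_basis β]
end

section
/- Let F be a finite field, let K be a field extension of F in which F is relatively algebraically closed (every element of K that is algebraic over F lies in the image of F), and let n ≥ 1. Let B be a finite-dimensional F-subalgebra of Mₙ(K), let B' ⊆ B be an F-subalgebra that is a semisimple ring, and let R ⊆ B be a two-sided ideal of B all of whose elements are nilpotent, such that B = B' ⊕ R as F-vector spaces (B' ∩ R = 0 and B' + R = B). Then the sum of K-spans is direct: span_K(B') ∩ span_K(R) = {0} inside Mₙ(K). -/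
/-!
Put `S = span_K B'` and `N = span_K R`. Two facts give `S ∩ N = 0`.

* `R` is a nil ideal of the Artinian ring `B`, hence is contained in the Jacobson radical of `B` and
  is nilpotent. So `N` is nilpotent too, and as `N` is stable under multiplication by `B`, every
  product `a * x * b` with `x ∈ N` and `a, b ∈ B` is nilpotent
  (`isNilpotent_of_mem_span_of_nil_ideal`).

* If `x ∈ S` and `a * x * b` is nilpotent for all `a, b ∈ B'`, then `x = 0`
  (`eq_zero_of_mem_span_range`). By Wedderburn–Artin and Wedderburn's little theorem the finite ring
  `B'` is a product of matrix rings over finite fields `D k`. Moving an entry of `x` to a diagonal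
  corner by matrix units gives a nilpotent element of the `K`-span of a copy of `D k`. With
  `Q = |D k|`, the `Q ^ t`-th power map acts on `∑ c_d d` by raising the coefficients to the
  `Q ^ t`-th power, since `d ^ Q = d`. Taking the `d` to be linearly independent over `K`, a
  nilpotent element must vanish (`eq_zero_of_isNilpotent_of_mem_span`).

The argument amounts to the separability of finite semisimple algebras over finite fields.
-/

/-- Frobenius for a finite sum of pairwise commuting elements in characteristic `p`. -/
lemma sum_pow_char_pow_of_commute {A ι : Type*} [Ring A] (p m : ℕ) [Fact p.Prime] [CharP A p]
    (f : ι → A) (hf : ∀ i j, Commute (f i) (f j)) (s : Finset ι) :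
    (∑ i ∈ s, f i) ^ p ^ m = ∑ i ∈ s, f i ^ p ^ m := by
  classical
  induction s using Finset.induction_on with
  | empty => simp [(Fact.out : p.Prime).ne_zero]
  | insert a s ha ih =>
    rw [Finset.sum_insert ha, Finset.sum_insert ha, add_pow_char_pow_of_commute, ih]
    exact Commute.sum_right _ _ _ fun i _ => hf a i

/-- The `K`-span of a commuting set of elements fixed by a power of Frobenius is reduced. -/
lemma eq_zero_of_isNilpotent_of_mem_span {K A : Type*} [Field K] [Ring A] [Algebra K A]
    (p e : ℕ) [Fact p.Prime] [CharP A p] (he : e ≠ 0) (s : Set A)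
    (hcomm : ∀ a ∈ s, ∀ b ∈ s, Commute a b) (hpow : ∀ a ∈ s, a ^ p ^ e = a)
    (y : A) (hy : y ∈ Submodule.span K s) (hnil : IsNilpotent y) : y = 0 := by
  obtain ⟨b, hbs, hspan, hli⟩ := exists_linearIndependent K s
  rw [← hspan, Finsupp.mem_span_iff_linearCombination] at hy
  obtain ⟨l, rfl⟩ := hy
  obtain ⟨t, ht⟩ := hnil
  have hp : 1 < p ^ e := Nat.one_lt_pow he (Fact.out : p.Prime).one_lt
  have hpowt : ∀ a ∈ s, a ^ p ^ (e * t) = a := by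
    intro a ha
    rw [pow_mul]
    clear ht
    induction t with
    | zero => simp
    | succ t ih => rw [pow_succ, pow_mul, ih, hpow a ha]
  have hle : t ≤ p ^ (e * t) := by
    rw [pow_mul]
    exact (Nat.lt_pow_self hp).le
  have h0 := pow_eq_zero_of_le hle ht
  rw [Finsupp.linearCombination_apply, Finsupp.sum, sum_pow_char_pow_of_commute] at h0
  · have h1 := linearIndependent_iff'.1 hli l.support (fun i => l i ^ p ^ (e * t)) (by
      rw [← h0]
      refine Finset.sum_congr rfl fun i _ => ?_
      rw [smul_pow, hpowt _ (hbs i.2)])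
    have hl : l = 0 := by
      ext i
      by_cases hi : i ∈ l.support
      · exact pow_eq_zero_iff (pow_ne_zero _ (Fact.out : p.Prime).ne_zero) |>.1 (h1 i hi)
      · simpa using hi
    simp [hl]
  · intro i j
    exact ((hcomm _ (hbs i.2) _ (hbs j.2)).smul_left _).smul_right _

/-- The `K`-span of an embedded finite product of matrix rings over finite division rings contains
no nonzero `x` all of whose two-sided multiples by the embedded ring are nilpotent. -/
lemma eq_zero_of_mem_span_range {K A : Type*} [Field K] [Ring A] [Algebra K A]
    (p : ℕ) [Fact p.Prime] [CharP A p] {m : ℕ} {D : Fin m → Type*} {d : Fin m → ℕ}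
    [∀ k, DivisionRing (D k)] [∀ k, Finite (D k)]
    (ψ : (∀ k, Matrix (Fin (d k)) (Fin (d k)) (D k)) →+* A) (hψ : Function.Injective ψ)
    (x : A) (hx : x ∈ Submodule.span K (Set.range ψ))
    (hnil : ∀ a b, IsNilpotent (ψ a * x * ψ b)) : x = 0 := by
  classical
  -- the matrix unit `c · E_ij` in the `k`-th factor
  let E : ∀ k, Fin (d k) → Fin (d k) → D k → ∀ k, Matrix (Fin (d k)) (Fin (d k)) (D k) :=
    fun k i j c => Pi.single k (Matrix.single i j c)
  have hEE : ∀ k i j l c c', E k i j c * E k j l c' = E k i l (c * c') := by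
    intro k i j l c c'
    simp only [E, ← Pi.single_mul, Matrix.single_mul_single_same]
  have hEaE : ∀ k i j i' j' a, E k i i' 1 * a * E k j' j 1 = E k i j (a k i' j') := by
    intro k i j i' j' a
    ext k' : 1
    by_cases h : k' = k
    · subst h
      simp [E, Matrix.single_mul_mul_single]
    · simp [E, h]
  -- Peirce decomposition of `x` with respect to the diagonal matrix units
  have hdecomp : x = ∑ k, ∑ i, ∑ j, ψ (E k i i 1) * x * ψ (E k j j 1) := by
    clear hnil
    induction hx using Submodule.span_induction with
    | mem x hx =>
      obtain ⟨a, rfl⟩ := hx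
      simp only [← map_mul, ← map_sum, hEaE]
      congr 1
      ext k' : 1
      rw [Finset.sum_apply, Finset.sum_eq_single k']
      · simp only [Finset.sum_apply, E, Pi.single_eq_same]
        exact Matrix.matrix_eq_sum_single _
      · intro k _ hk
        simp [E, Finset.sum_apply, hk.symm]
      · simp
    | zero => simp
    | add x y _ _ hx hy =>
      simp only [mul_add, add_mul, Finset.sum_add_distrib]
      rw [← hx, ← hy]
    | smul c x _ hx =>
      simp only [mul_smul_comm, smul_mul_assoc, ← Finset.smul_sum]
      rw [← hx]
  rw [hdecomp]
  refine Finset.sum_eq_zero fun k _ => Finset.sum_eq_zero fun i _ => Finset.sum_eq_zero fun j _ => ?_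
  have hcorner : ψ (E k i i 1) * x * ψ (E k j i 1) ∈
      Submodule.span K (Set.range fun c => ψ (E k i i c)) := by
    clear hdecomp hnil
    induction hx using Submodule.span_induction with
    | mem x hx =>
      obtain ⟨a, rfl⟩ := hx
      rw [← map_mul, ← map_mul, hEaE]
      exact Submodule.subset_span ⟨_, rfl⟩
    | zero => simp
    | add x y _ _ hx hy =>
      rw [mul_add, add_mul]
      exact add_mem hx hy
    | smul c x _ hx =>
      rw [mul_smul_comm, smul_mul_assoc]
      exact Submodule.smul_mem _ _ hx
  have hpD : (p : D k) = 0 := by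
    have h : (p : ∀ k, Matrix (Fin (d k)) (Fin (d k)) (D k)) = 0 := hψ (by simp)
    have := congrFun (congrFun (congrFun h k) i) i
    simpa [Matrix.natCast_apply] using this
  have hcharD : CharP (D k) p := (CharP.charP_iff_prime_eq_zero Fact.out).2 hpD
  have := Fintype.ofFinite (D k)
  -- commutativity of `D k` is Wedderburn's little theorem
  obtain ⟨e, -, he⟩ := @FiniteField.card (D k) (littleWedderburn (D k)) _ p hcharD
  have hDcomm : ∀ a b : D k, a * b = b * a := fun a b => (littleWedderburn (D k)).mul_comm a b
  have hpow : ∀ c : D k, ∀ r : ℕ, r ≠ 0 → ψ (E k i i c) ^ r = ψ (E k i i (c ^ r)) := by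
    intro c r hr
    induction r with
    | zero => exact absurd rfl hr
    | succ r ih =>
      rcases eq_or_ne r 0 with rfl | h
      · simp
      · rw [pow_succ, ih h, ← map_mul, hEE, pow_succ]
  have hzero := eq_zero_of_isNilpotent_of_mem_span (K := K) p e e.ne_zero _ (by
    rintro _ ⟨a, rfl⟩ _ ⟨b, rfl⟩
    simp only [Commute, SemiconjBy, ← map_mul, hEE, hDcomm a b]) (by
    rintro _ ⟨a, rfl⟩
    simp only
    rw [hpow _ _ (pow_ne_zero _ (Fact.out : p.Prime).ne_zero), ← he, FiniteField.pow_card])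
    _ hcorner (hnil _ _)
  have : E k j j 1 = E k j i 1 * E k i j 1 := by rw [hEE, one_mul]
  rw [this, map_mul, ← mul_assoc, hzero, zero_mul]

open scoped Pointwise in
/-- The `K`-span of a nil left ideal of a subalgebra that is finite-dimensional over `F`
consists of nilpotent elements. -/
lemma isNilpotent_of_mem_span_of_nil_ideal {F K A : Type*} [Field F] [Field K] [Ring A]
    [Algebra F A] [Algebra K A] (B : Subalgebra F A) [FiniteDimensional F B]
    (R : Submodule F A) (hRB : R ≤ Subalgebra.toSubmodule B)
    (hleft : ∀ b ∈ B, ∀ r ∈ R, b * r ∈ R) (hnil : ∀ r ∈ R, IsNilpotent r)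
    (x : A) (hx : x ∈ Submodule.span K (R : Set A)) : IsNilpotent x := by
  have : IsArtinianRing B := IsArtinianRing.of_finite F B
  let J : Ideal B :=
    { carrier := {b | (b : A) ∈ R}
      add_mem' := fun ha hb => R.add_mem ha hb
      zero_mem' := R.zero_mem
      smul_mem' := fun b r hr => hleft b b.2 r hr }
  have hJ : J ≤ Ring.jacobson B := by
    rw [← Ideal.jacobson_bot]
    intro r hr
    rw [Ideal.mem_jacobson_iff]
    intro y
    have hyr : IsNilpotent (y * r) := by
      obtain ⟨t, ht⟩ := hnil _ (J.mul_mem_left y hr)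
      exact ⟨t, Subtype.ext (by simpa using ht)⟩
    obtain ⟨z, hz⟩ := hyr.isUnit_one_add.exists_left_inv
    refine ⟨z, ?_⟩
    rw [Ideal.mem_bot, sub_eq_zero, ← hz]
    noncomm_ring
  obtain ⟨t, ht⟩ := IsSemiprimaryRing.isNilpotent (R := B)
  have hJt : J ^ t = ⊥ := by
    rw [eq_bot_iff, ← Ideal.zero_eq_bot, ← ht]
    exact Ideal.pow_right_mono hJ t
  have hpow : ∀ k : ℕ, (R : Set A) ^ k ⊆ B.val '' (J ^ k : Ideal B) := by
    intro k
    induction k with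
    | zero =>
      rintro _ h
      exact ⟨1, by simp [Submodule.pow_zero], by simpa using h.symm⟩
    | succ k ih =>
      rw [pow_succ]
      rintro _ ⟨a, ha, r, hr, rfl⟩
      obtain ⟨a', ha', rfl⟩ := ih ha
      refine ⟨a' * ⟨r, hRB hr⟩, ?_, rfl⟩
      rw [Submodule.pow_succ]
      exact Ideal.mul_mem_mul ha' hr
  refine ⟨t, ?_⟩
  have hxt := Submodule.pow_mem_pow _ hx t
  rw [Submodule.span_pow] at hxt
  have hle : Submodule.span K ((R : Set A) ^ t) ≤ ⊥ := by
    rw [Submodule.span_le]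
    intro a ha
    obtain ⟨b, hb, rfl⟩ := hpow t ha
    rw [hJt] at hb
    have : b = 0 := hb
    simp [this]
  exact hle hxt

theorem stmt_3 (F K : Type*) [Field F] [Fintype F] [Field K] [Algebra F K]
    (hconst : ∀ x : K, IsAlgebraic F x → x ∈ (algebraMap F K).range)
    (n : ℕ) (hn : 1 ≤ n)
    (B B' : Subalgebra F (Matrix (Fin n) (Fin n) K))
    [FiniteDimensional F B] (hB'B : B' ≤ B) [IsSemisimpleRing B']
    (R : Submodule F (Matrix (Fin n) (Fin n) K))
    (hRB : R ≤ Subalgebra.toSubmodule B)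
    (hRleftIdeal : ∀ b ∈ B, ∀ r ∈ R, b * r ∈ R)
    (hRrightIdeal : ∀ b ∈ B, ∀ r ∈ R, r * b ∈ R)
    (hRnil : ∀ r ∈ R, IsNilpotent r)
    (hdisj : Subalgebra.toSubmodule B' ⊓ R = ⊥)
    (hsum : Subalgebra.toSubmodule B' ⊔ R = Subalgebra.toSubmodule B) :
    Submodule.span K (B' : Set (Matrix (Fin n) (Fin n) K))
      ⊓ Submodule.span K (R : Set (Matrix (Fin n) (Fin n) K)) = ⊥ := by
  rw [eq_bot_iff]
  rintro x ⟨hxS, hxN⟩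
  rw [Submodule.mem_bot]
  have : NeZero n := ⟨by omega⟩
  obtain ⟨p, hchar⟩ := CharP.exists F
  have : Fact p.Prime := ⟨CharP.char_is_prime F p⟩
  have : CharP (Matrix (Fin n) (Fin n) K) p :=
    charP_of_injective_algebraMap (algebraMap F (Matrix (Fin n) (Fin n) K)).injective p
  have hfinB : Finite B := Module.finite_of_finite F
  have hfinB' : Finite B' :=
    Finite.of_injective (Subalgebra.inclusion hB'B) (Subalgebra.inclusion_injective hB'B)
  obtain ⟨m, D, d, _, hd, ⟨φ⟩⟩ := IsSemisimpleRing.exists_ringEquiv_pi_matrix_divisionRing B'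
  have hfinD : ∀ k, Finite (D k) := by
    classical
    intro k
    have := hd k
    have := Finite.of_equiv B' φ.toEquiv
    refine Finite.of_injective (β := ∀ k, Matrix (Fin (d k)) (Fin (d k)) (D k))
      (fun c => Pi.single k (Matrix.single 0 0 c)) ?_
    intro a b hab
    have := congrFun (congrFun (Pi.single_injective k hab) 0) 0
    simpa using this
  let ψ : (∀ k, Matrix (Fin (d k)) (Fin (d k)) (D k)) →+* Matrix (Fin n) (Fin n) K :=
    (B'.val : B' →+* Matrix (Fin n) (Fin n) K).comp φ.symm.toRingHom
  have hψB : ∀ a, ψ a ∈ B' := fun a => (φ.symm a).2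
  have hrange : Set.range ψ = (B' : Set (Matrix (Fin n) (Fin n) K)) := by
    ext y
    refine ⟨fun ⟨a, ha⟩ => ha ▸ hψB a, fun hy => ⟨φ ⟨y, hy⟩, ?_⟩⟩
    simp [ψ]
  refine eq_zero_of_mem_span_range (K := K) p ψ
    (Subtype.val_injective.comp φ.symm.injective) x (hrange ▸ hxS) fun a b => ?_
  refine isNilpotent_of_mem_span_of_nil_ideal (K := K) B R hRB hRleftIdeal hRnil _ ?_
  have ha := hB'B (hψB a)
  have hb := hB'B (hψB b)
  clear hxS
  induction hxN using Submodule.span_induction with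
  | mem x hx => exact Submodule.subset_span (hRrightIdeal _ hb _ (hRleftIdeal _ ha _ hx))
  | zero => simp
  | add x y _ _ hx hy =>
    rw [mul_add, add_mul]
    exact add_mem hx hy
  | smul c x _ hx =>
    rw [mul_smul_comm, smul_mul_assoc]
    exact Submodule.smul_mem _ _ hx
end

section
/- The number of orbits of the action of GL₂(F) on ℙ¹(E) equals (q^{N-1} + q² − 2)/(q² − 1) when N is odd, and equals (q^{N-1} + 2q² − q − 2)/(q² − 1) when N is even. Equivalently, the number of orbits is 1 + (q^{N-1} − 1)/(q² − 1) when N is odd, and 1 + (q^{N-1} − 1)/(q² − 1) + q/(q + 1) when N is even (in each case the stated expression is an integer). -/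
open Matrix

/-- `ℙ¹(E)`: the set of one-dimensional `E`-linear subspaces of `E²`. -/
def ProjLine (E : Type*) [Field E] : Type _ :=
  {W : Submodule E (Fin 2 → E) // Module.finrank E W = 1}

/-- The image of a subspace of `E²` under the linear map given by a matrix. -/
noncomputable def matActs {E : Type*} [Field E] (A : Matrix (Fin 2) (Fin 2) E)
    (W : Submodule E (Fin 2 → E)) : Submodule E (Fin 2 → E) :=
  W.map (Matrix.toLin' A)

/-- The orbit relation on `ℙ¹(E)` for the action of `GL₂(F)` through the
entrywise inclusion `F ↪ E`. -/
def glOrbitRel (F E : Type*) [Field F] [Field E] [Algebra F E]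
    (W₁ W₂ : ProjLine E) : Prop :=
  ∃ g : GL (Fin 2) F,
    matActs ((g : Matrix (Fin 2) (Fin 2) F).map (algebraMap F E)) W₁.1 = W₂.1

/-!
The sum over the points of `ℙ¹(E)` of the orders of their stabilizers equals the number of orbits
times `|GL₂(F)|`. In the affine coordinate `x ∈ E ∪ {∞}`, the matrix `!![a, b; c, d]` fixes `x`
exactly when `a x + b = x (c x + d)`, and this gives the order of every stabilizer:

* `q (q - 1)²` if `x ∈ F ∪ {∞}` (`card_fixes_none`, `card_fixes_algebraMap`);
* `q² - 1` if `x` is quadratic over `F` (`card_fixes_of_isQuad`);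
* `q - 1` if `x` has degree at least `3`, since then `1, x, x²` are linearly independent over `F`
  and only scalar matrices qualify (`card_fixes_of_not_isQuad`).

The elements of degree at most `2` over `F` are those of `F` if `N` is odd, and those of the subfield
with `q²` elements if `N` is even (`card_isQuad_of_odd`, `card_isQuad_of_even`). Substituting these
numbers and dividing by `q (q - 1)` yields both formulas.
-/

/-- The element `x` of `E` has degree at most `2` over `F`; elements of `F` itself are included. -/
def IsQuad (F : Type*) {E : Type*} [Field F] [Field E] [Algebra F E] (x : E) : Prop :=
  ∃ s t : F, x ^ 2 = algebraMap F E s * x + algebraMap F E t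

/-- The homography given by `g` fixes the point of `E ∪ {∞}`, with `none` in the role of `∞`.
Denominators are cleared, so that no case distinction on `c x + d = 0` is needed. -/
def Fixes {F E : Type*} [Field F] [Field E] [Algebra F E] (g : GL (Fin 2) F) : Option E → Prop
  | none => g 1 0 = 0
  | some x => algebraMap F E (g 0 0) * x + algebraMap F E (g 0 1) =
      x * (algebraMap F E (g 1 0) * x + algebraMap F E (g 1 1))

section

variable {F E : Type*} [Field F] [Field E] [Algebra F E]

/-! ### Elements of degree at most two -/

lemma isQuad_algebraMap (a : F) : IsQuad F (algebraMap F E a) :=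
  ⟨a, 0, by simp [sq]⟩

lemma finrank_adjoin_of_isQuad {x : E} (hx : IsQuad F x)
    (hxF : x ∉ Set.range (algebraMap F E)) :
    Module.finrank F (IntermediateField.adjoin F {x}) = 2 := by
  obtain ⟨s, t, h⟩ := hx
  let p : Polynomial F := Polynomial.X ^ 2 - (Polynomial.C s * Polynomial.X + Polynomial.C t)
  have hp : p.natDegree = 2 := by simp only [p]; compute_degree!
  have hm : p.Monic := by simp only [p]; monicity!
  have hpx : Polynomial.aeval x p = 0 := by simp [p, h]
  have hint : IsIntegral F x := ⟨p, hm, by simpa [Polynomial.aeval_def] using hpx⟩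
  rw [IntermediateField.adjoin.finrank hint]
  have h2 := Polynomial.natDegree_le_of_dvd (minpoly.dvd F x hpx) hm.ne_zero
  exact le_antisymm (hp ▸ h2) ((minpoly.two_le_natDegree_iff hint).2 hxF)

lemma isQuad_of_finrank_eq_two (h : Module.finrank F E = 2) (y : E) : IsQuad F y := by
  by_cases hy : y ∈ Set.range (algebraMap F E)
  · obtain ⟨a, rfl⟩ := hy
    exact isQuad_algebraMap a
  have : FiniteDimensional F E := Module.finite_of_finrank_pos (by omega)
  have hint : IsIntegral F y := .of_finite F y
  have h1 : (minpoly F y).natDegree = 2 := le_antisymm (h ▸ minpoly.natDegree_le y)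
    ((minpoly.two_le_natDegree_iff hint).2 hy)
  have h2 := minpoly.aeval F y
  have h3 : (minpoly F y).coeff 2 = 1 := by rw [← h1]; exact minpoly.monic hint
  rw [Polynomial.aeval_eq_sum_range, h1] at h2
  simp only [Finset.sum_range_succ, Algebra.smul_def, h3] at h2
  refine ⟨-(minpoly F y).coeff 1, -(minpoly F y).coeff 0, ?_⟩
  simp at h2 ⊢
  linear_combination h2

lemma card_range_algebraMap :
    Nat.card {x : E // x ∈ Set.range (algebraMap F E)} = Nat.card F :=
  Nat.card_range_of_injective (algebraMap F E).injective

lemma card_isQuad_of_odd (h : Odd (Module.finrank F E)) :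
    Nat.card {x : E // IsQuad F x} = Nat.card F := by
  rw [← card_range_algebraMap (F := F) (E := E)]
  refine Nat.card_congr (Equiv.subtypeEquivRight fun x => ⟨fun hx => ?_, ?_⟩)
  · by_contra hxF
    have h1 := finrank_adjoin_of_isQuad hx hxF
    have h2 := Module.finrank_mul_finrank F (IntermediateField.adjoin F {x}) E
    rw [h1] at h2
    rw [← h2] at h
    exact (Nat.not_odd_iff_even.2 even_two) (Nat.odd_mul.1 h).1
  · rintro ⟨a, rfl⟩
    exact isQuad_algebraMap a

variable [Finite F] [Finite E]

lemma pow_card_sq_of_isQuad {x : E} (hx : IsQuad F x) : x ^ (Nat.card F ^ 2) = x := by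
  by_cases hxF : x ∈ Set.range (algebraMap F E)
  · obtain ⟨a, rfl⟩ := hxF
    have := Fintype.ofFinite F
    rw [← map_pow, Nat.card_eq_fintype_card, FiniteField.pow_card_pow]
  have h1 := finrank_adjoin_of_isQuad hx hxF
  have h2 := Module.natCard_eq_pow_finrank (K := F) (V := IntermediateField.adjoin F {x})
  have := Fintype.ofFinite (IntermediateField.adjoin F {x})
  rw [h1, Nat.card_eq_fintype_card (α := IntermediateField.adjoin F {x})] at h2
  have h3 := FiniteField.pow_card (IntermediateField.AdjoinSimple.gen F x)
  rw [h2] at h3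
  simpa using congrArg (algebraMap _ E) h3

/-- For even degree, the elements of degree at most `2` are the roots of `X ^ q² - X`, that is, the
elements of the unique subfield with `q²` elements. -/
lemma card_isQuad_of_even (h : Even (Module.finrank F E)) :
    Nat.card {x : E // IsQuad F x} = Nat.card F ^ 2 := by
  classical
  obtain ⟨p, hp⟩ := CharP.exists F
  have : Fact p.Prime := ⟨(CharP.char_is_prime_or_zero F p).resolve_right
    (CharP.char_ne_zero_of_finite F p)⟩
  have hK : Module.finrank F (FiniteField.Extension F p 2) = 2 := FiniteField.finrank_extension ..
  obtain ⟨f⟩ := FiniteField.nonempty_algHom_of_finrank_dvd (F := F)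
    (K := FiniteField.Extension F p 2) (L := E) (by rw [hK]; exact h.two_dvd)
  have hcard : Nat.card (FiniteField.Extension F p 2) = Nat.card F ^ 2 := by
    rw [Module.natCard_eq_pow_finrank (K := F), hK]
  apply le_antisymm
  · have := Fintype.ofFinite E
    have h1 : 1 < Nat.card F ^ 2 := Nat.one_lt_pow (by norm_num) Finite.one_lt_card
    have hne := FiniteField.X_pow_card_sub_X_ne_zero E h1
    have hdeg := FiniteField.X_pow_card_sub_X_natDegree_eq E h1
    rw [Nat.card_eq_fintype_card, Fintype.card_subtype]
    rw [← hdeg]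
    refine le_trans (Finset.card_le_card ?_) ((Multiset.toFinset_card_le _).trans
      (Polynomial.card_roots' _))
    intro x hx
    simp only [Finset.mem_filter, Finset.mem_univ, true_and] at hx
    simp [hne, pow_card_sq_of_isQuad hx, sub_self]
  · rw [← hcard]
    refine Nat.card_le_card_of_injective
      (fun y : FiniteField.Extension F p 2 => (⟨f y, ?_⟩ : {x : E // IsQuad F x})) ?_
    · obtain ⟨s, t, hst⟩ := isQuad_of_finrank_eq_two hK y
      exact ⟨s, t, by simpa using congrArg f hst⟩
    · intro y z hyz
      exact f.toRingHom.injective (congrArg Subtype.val hyz)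

end

section

variable {F E : Type*} [Field F] [Field E] [Algebra F E]

/-! ### Orders of the stabilizers -/

lemma det_ne (g : GL (Fin 2) F) : g 0 0 * g 1 1 - g 0 1 * g 1 0 ≠ 0 := by
  have := g.det_ne_zero
  rwa [Matrix.det_fin_two] at this

lemma gl_ext {g h : GL (Fin 2) F} (h00 : g 0 0 = h 0 0) (h01 : g 0 1 = h 0 1)
    (h10 : g 1 0 = h 1 0) (h11 : g 1 1 = h 1 1) : g = h := by
  ext i j
  fin_cases i <;> fin_cases j <;> assumption

lemma card_fixes_none :
    Nat.card {g : GL (Fin 2) F // Fixes g (none : Option E)} =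
      Nat.card F * (Nat.card F - 1) ^ 2 := by
  have : Nat.card (F × Fˣ × Fˣ) = Nat.card F * (Nat.card F - 1) ^ 2 := by
    simp [Nat.card_prod, Nat.card_units, sq]
  rw [← this]
  refine (Nat.card_eq_of_bijective (fun p : F × Fˣ × Fˣ =>
    (⟨GeneralLinearGroup.mkOfDetNeZero !![(p.2.1 : F), p.1; 0, p.2.2] (by simp), by
      simp [Fixes, GeneralLinearGroup.mkOfDetNeZero]⟩ :
      {g : GL (Fin 2) F // Fixes g (none : Option E)})) ⟨?_, ?_⟩).symm
  · rintro ⟨b, a, d⟩ ⟨b', a', d'⟩ h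
    have h := congrArg (fun g => ((Subtype.val g : GL (Fin 2) F) : Matrix (Fin 2) (Fin 2) F)) h
    have h00 := congrFun₂ h 0 0
    have h01 := congrFun₂ h 0 1
    have h11 := congrFun₂ h 1 1
    simp [GeneralLinearGroup.mkOfDetNeZero] at h00 h01 h11
    ext <;> assumption_mod_cast
  · rintro ⟨g, hg⟩
    have hd := det_ne g
    simp only [Fixes] at hg
    simp only [hg, mul_zero, sub_zero, mul_ne_zero_iff] at hd
    refine ⟨⟨g 0 1, Units.mk0 _ hd.1, Units.mk0 _ hd.2⟩, Subtype.ext (gl_ext ?_ ?_ ?_ ?_)⟩ <;>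
      simp [GeneralLinearGroup.mkOfDetNeZero, hg]

/-- For `x ∈ F` the determinant factors as `(a - c x) (d + c x)`, so that the stabilizer is
parametrized by `c ∈ F` and these two nonzero factors. -/
lemma card_fixes_algebraMap (x : F) :
    Nat.card {g : GL (Fin 2) F // Fixes g (some (algebraMap F E x))} =
      Nat.card F * (Nat.card F - 1) ^ 2 := by
  have : Nat.card (F × Fˣ × Fˣ) = Nat.card F * (Nat.card F - 1) ^ 2 := by
    simp [Nat.card_prod, Nat.card_units, sq]
  rw [← this]
  refine (Nat.card_eq_of_bijective (fun p : F × Fˣ × Fˣ =>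
    (⟨GeneralLinearGroup.mkOfDetNeZero
      !![p.2.1 + p.1 * x, p.1 * x ^ 2 + (p.2.2 - p.1 * x - (p.2.1 + p.1 * x)) * x;
        p.1, p.2.2 - p.1 * x] (by
        have := mul_ne_zero p.2.1.ne_zero p.2.2.ne_zero
        rw [Matrix.det_fin_two_of]
        convert this using 1
        ring), by
      simp [Fixes, GeneralLinearGroup.mkOfDetNeZero]; ring⟩ :
      {g : GL (Fin 2) F // Fixes g (some (algebraMap F E x))})) ⟨?_, ?_⟩).symm
  · rintro ⟨c, a, d⟩ ⟨c', a', d'⟩ h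
    have h := congrArg (fun g => ((Subtype.val g : GL (Fin 2) F) : Matrix (Fin 2) (Fin 2) F)) h
    have h00 := congrFun₂ h 0 0
    have h10 := congrFun₂ h 1 0
    have h11 := congrFun₂ h 1 1
    simp [GeneralLinearGroup.mkOfDetNeZero] at h00 h10 h11
    subst h10
    simp at h00 h11
    ext <;> simp [h00, h11]
  · rintro ⟨g, hg⟩
    have hd := det_ne g
    simp only [Fixes] at hg
    have hg' : g 0 1 = x * (g 1 0 * x + g 1 1) - g 0 0 * x := by
      apply (algebraMap F E).injective
      simp only [map_sub, map_mul, map_add]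
      linear_combination hg
    have hd' : (g 0 0 - g 1 0 * x) * (g 1 1 + g 1 0 * x) ≠ 0 := by
      convert hd using 1
      rw [hg']; ring
    rw [mul_ne_zero_iff] at hd'
    refine ⟨⟨g 1 0, Units.mk0 _ hd'.1, Units.mk0 _ hd'.2⟩, Subtype.ext (gl_ext ?_ ?_ ?_ ?_)⟩ <;>
      simp [GeneralLinearGroup.mkOfDetNeZero]
    rw [hg']; ring

/-- If `x² = s x + t` with `x ∉ F`, the matrices having `(x, 1)` as an eigenvector are
`!![a, c t; c, a - c s]`; their determinant is the norm of `a - c x`, which vanishes only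
for `a = c = 0`. -/
lemma card_fixes_of_isQuad [Finite F] {x : E} (hx : IsQuad F x) (hxF : x ∉ Set.range (algebraMap F E)) :
    Nat.card {g : GL (Fin 2) F // Fixes g (some x)} = Nat.card F ^ 2 - 1 := by
  obtain ⟨s, t, hst⟩ := hx
  have : Nat.card {p : F × F // p ≠ 0} = Nat.card F ^ 2 - 1 := by
    classical
    have := Fintype.ofFinite F
    rw [Nat.card_eq_fintype_card, Nat.card_eq_fintype_card, Fintype.card_subtype_compl]
    simp [sq]
  rw [← this]
  -- The norm form factors over `E`, and a zero with `c ≠ 0` would put a root, hence `x`, into `F`.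
  have hirr : ∀ a c : F, a * (a - c * s) - c * t * c = 0 → (a, c) = 0 := by
    intro a c h
    have h' : (algebraMap F E a - algebraMap F E c * x) *
        (algebraMap F E a - algebraMap F E c * (algebraMap F E s - x)) = 0 := by
      have := congrArg (algebraMap F E) h
      simp only [map_sub, map_mul, map_zero] at this
      linear_combination this - algebraMap F E c ^ 2 * hst
    have hc : c = 0 := by
      by_contra hc
      have hcE : algebraMap F E c ≠ 0 := by simpa using hc
      rcases mul_eq_zero.1 h' with h' | h'
      · exact hxF ⟨a / c, by rw [map_div₀, div_eq_iff hcE]; linear_combination h'⟩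
      · exact hxF ⟨s - a / c, by
          rw [map_sub, map_div₀]; field_simp; linear_combination -h'⟩
    subst hc
    simpa using h
  refine (Nat.card_eq_of_bijective (fun p : {p : F × F // p ≠ 0} =>
    (⟨GeneralLinearGroup.mkOfDetNeZero
      !![p.1.1, p.1.2 * t; p.1.2, p.1.1 - p.1.2 * s] (by
        rw [Matrix.det_fin_two_of]
        exact fun h => p.2 (hirr _ _ h)), by
      simp [Fixes, GeneralLinearGroup.mkOfDetNeZero]
      linear_combination -algebraMap F E p.1.2 * hst⟩ :
      {g : GL (Fin 2) F // Fixes g (some x)})) ⟨?_, ?_⟩).symm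
  · rintro ⟨⟨a, c⟩, _⟩ ⟨⟨a', c'⟩, _⟩ h
    have h := congrArg (fun g => ((Subtype.val g : GL (Fin 2) F) : Matrix (Fin 2) (Fin 2) F)) h
    have h00 := congrFun₂ h 0 0
    have h10 := congrFun₂ h 1 0
    simp [GeneralLinearGroup.mkOfDetNeZero] at h00 h10
    simp [h00, h10]
  · rintro ⟨g, hg⟩
    have hd := det_ne g
    simp only [Fixes] at hg
    -- Reducing the fixed-point equation by `x² = s x + t` leaves an `F`-linear relation
    -- between `1` and `x`, so both coefficients vanish.
    have hlin : algebraMap F E (g 1 0 * s + g 1 1 - g 0 0) * x =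
        algebraMap F E (g 0 1 - g 1 0 * t) := by
      simp only [map_sub, map_mul, map_add]
      linear_combination -hg - algebraMap F E (g 1 0) * hst
    have h1 : g 1 0 * s + g 1 1 - g 0 0 = 0 := by
      by_contra hne
      refine hxF ⟨(g 0 1 - g 1 0 * t) / (g 1 0 * s + g 1 1 - g 0 0), ?_⟩
      rw [map_div₀, ← hlin, mul_div_cancel_left₀]
      simpa only [ne_eq, map_eq_zero] using hne
    have h2 : g 0 1 - g 1 0 * t = 0 := by
      rw [h1, map_zero, zero_mul] at hlin
      exact (map_eq_zero (algebraMap F E)).1 hlin.symm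
    refine ⟨⟨⟨g 0 0, g 1 0⟩, fun h0 => hd ?_⟩, Subtype.ext (gl_ext ?_ ?_ ?_ ?_)⟩
    · simp only [Prod.mk_eq_zero] at h0
      simp [h0.1, h0.2]
    all_goals simp [GeneralLinearGroup.mkOfDetNeZero]
    · linear_combination -h2
    · linear_combination -h1

/-- Only scalar matrices fix a point of degree at least `3` over `F`. -/
lemma card_fixes_of_not_isQuad {x : E} (hx : ¬ IsQuad F x) :
    Nat.card {g : GL (Fin 2) F // Fixes g (some x)} = Nat.card F - 1 := by
  rw [← Nat.card_units]
  have hxF : x ∉ Set.range (algebraMap F E) := by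
    rintro ⟨a, rfl⟩
    exact hx (isQuad_algebraMap a)
  refine (Nat.card_eq_of_bijective (fun a : Fˣ =>
    (⟨GeneralLinearGroup.mkOfDetNeZero !![(a : F), 0; 0, a] (by simp), by
      simp [Fixes, GeneralLinearGroup.mkOfDetNeZero, mul_comm]⟩ :
      {g : GL (Fin 2) F // Fixes g (some x)})) ⟨?_, ?_⟩).symm
  · intro a a' h
    have h := congrArg (fun g => ((Subtype.val g : GL (Fin 2) F) : Matrix (Fin 2) (Fin 2) F)) h
    have h00 := congrFun₂ h 0 0
    simp [GeneralLinearGroup.mkOfDetNeZero] at h00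
    exact_mod_cast h00
  · rintro ⟨g, hg⟩
    have hd := det_ne g
    simp only [Fixes] at hg
    have h10 : g 1 0 = 0 := by
      by_contra hne
      have hneE : algebraMap F E (g 1 0) ≠ 0 := by simpa only [ne_eq, map_eq_zero] using hne
      refine hx ⟨(g 0 0 - g 1 1) / g 1 0, g 0 1 / g 1 0, ?_⟩
      rw [map_div₀, map_div₀, map_sub]
      field_simp
      linear_combination -hg
    have hlin : algebraMap F E (g 1 1 - g 0 0) * x = algebraMap F E (g 0 1) := by
      rw [h10, map_zero] at hg
      rw [map_sub]
      linear_combination -hg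
    have h1 : g 1 1 - g 0 0 = 0 := by
      by_contra hne
      refine hxF ⟨g 0 1 / (g 1 1 - g 0 0), ?_⟩
      rw [map_div₀, ← hlin, mul_div_cancel_left₀]
      simpa only [ne_eq, map_eq_zero] using hne
    have h2 : g 0 1 = 0 := by
      rw [h1, map_zero, zero_mul] at hlin
      exact (map_eq_zero (algebraMap F E)).1 hlin.symm
    have h3 : g 0 0 ≠ 0 := by
      intro h
      simp [h, h2] at hd
    refine ⟨Units.mk0 _ h3, Subtype.ext (gl_ext ?_ ?_ ?_ ?_)⟩ <;>
      simp [GeneralLinearGroup.mkOfDetNeZero, h10, h2]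
    linear_combination -h1

end

section

variable {F E : Type*} [Field F] [Field E] [Algebra F E]

/-! ### The action on the projective line -/

lemma projLine_ext_iff (W₁ W₂ : ProjLine E) : W₁ = W₂ ↔ W₁.1 = W₂.1 := Subtype.ext_iff

/-- The action of `GL₂(F)` on `ℙ¹(E)` whose orbit relation is `glOrbitRel`. -/
noncomputable instance projLineAction : MulAction (GL (Fin 2) F) (ProjLine E) where
  smul g W := ⟨matActs ((g : Matrix (Fin 2) (Fin 2) F).map (algebraMap F E)) W.1, by
    have hinj : Function.Injective
        (Matrix.toLin' ((g : Matrix (Fin 2) (Fin 2) F).map (algebraMap F E))) := by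
      apply Matrix.mulVec_injective_of_isUnit
      exact (GeneralLinearGroup.map (algebraMap F E) g).isUnit
    rw [matActs, ← (Submodule.equivMapOfInjective _ hinj W.1).finrank_eq]
    exact W.2⟩
  one_smul W := Subtype.ext <| by
    change matActs _ _ = _
    simp [matActs]
  mul_smul g h W := Subtype.ext <| by
    change matActs _ _ = matActs _ (matActs _ _)
    simp [matActs, Matrix.map_mul, Matrix.toLin'_mul, Submodule.map_comp]

lemma coe_smul_projLine (g : GL (Fin 2) F) (W : ProjLine E) : (g • W).1 =
    matActs ((g : Matrix (Fin 2) (Fin 2) F).map (algebraMap F E)) W.1 := rfl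

lemma card_quot_glOrbitRel : Nat.card (Quot (glOrbitRel F E)) =
    Nat.card (MulAction.orbitRel.Quotient (GL (Fin 2) F) (ProjLine E)) := by
  refine Nat.card_congr (Quot.congrRight fun W₁ W₂ => ?_)
  rw [Setoid.comm', MulAction.orbitRel_apply]
  exact exists_congr fun g => (projLine_ext_iff (g • W₁) W₂).symm

/-- A direction vector of the point `o` of `ℙ¹(E) = E ∪ {∞}`, with `none` in the role of `∞`. -/
def dirVec : Option E → Fin 2 → E
  | none => ![1, 0]
  | some x => ![x, 1]

lemma dirVec_ne_zero (o : Option E) : dirVec o ≠ 0 := by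
  cases o
  · exact fun h => one_ne_zero (congrFun h 0)
  · exact fun h => one_ne_zero (congrFun h 1)

/-- The point of `ℙ¹(E)` with affine coordinate `o`; `none` stands for `∞`. -/
def line (o : Option E) : ProjLine E :=
  ⟨Submodule.span E {dirVec o}, finrank_span_singleton (dirVec_ne_zero o)⟩

lemma line_bijective : Function.Bijective (line (E := E)) := by
  constructor
  · intro o o' h
    have h1 : dirVec o' ∈ Submodule.span E {dirVec o} := by
      rw [show Submodule.span E {dirVec o} = Submodule.span E {dirVec o'} from congrArg Subtype.val h]
      exact Submodule.mem_span_singleton_self _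
    obtain ⟨c, hc⟩ := Submodule.mem_span_singleton.1 h1
    have h0 := congrFun hc 0
    have h1 := congrFun hc 1
    cases o <;> cases o' <;> simp [dirVec] at h0 h1 ⊢
    · simp [h1] at h0
    · simpa [h1] using h0
  · rintro ⟨W, hW⟩
    have hne : W ≠ ⊥ := by
      rintro rfl
      simp at hW
    obtain ⟨v, hv, hv0⟩ := Submodule.exists_mem_ne_zero_of_ne_bot hne
    have key : ∃ o : Option E, dirVec o ∈ W := by
      by_cases h1 : v 1 = 0
      · have h0 : v 0 ≠ 0 := fun h0 => hv0 (by ext i; fin_cases i <;> assumption)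
        refine ⟨none, ?_⟩
        convert W.smul_mem (v 0)⁻¹ hv using 1
        ext i
        fin_cases i <;> simp [dirVec, h0, h1]
      · refine ⟨some (v 0 / v 1), ?_⟩
        convert W.smul_mem (v 1)⁻¹ hv using 1
        ext i
        fin_cases i <;> simp [dirVec, h1, div_eq_inv_mul]
    obtain ⟨o, ho⟩ := key
    refine ⟨o, Subtype.ext (Submodule.eq_of_le_of_finrank_eq ?_ ?_)⟩
    · simpa [line] using ho
    · rw [(line o).2, hW]

lemma smul_line_iff (g : GL (Fin 2) F) (o : Option E) :
    g • line o = line o ↔ Fixes g o := by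
  -- An invertible map fixes a line as soon as it sends a direction vector into it.
  have hmem : g • line o = line o ↔
      ((g : Matrix (Fin 2) (Fin 2) F).map (algebraMap F E)) *ᵥ dirVec o ∈ Submodule.span E {dirVec o} := by
    rw [projLine_ext_iff, coe_smul_projLine]
    constructor
    · intro h
      change _ ∈ (line o).1
      rw [← h]
      exact Submodule.mem_map_of_mem (Submodule.mem_span_singleton_self _)
    · intro h
      refine Submodule.eq_of_le_of_finrank_eq ?_ ?_
      · simp only [matActs, line, Submodule.map_span, Set.image_singleton, Submodule.span_le,
          Set.singleton_subset_iff]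
        exact h
      · rw [(line o).2]; exact (g • line o).2
  rw [hmem, Submodule.mem_span_singleton]
  cases o with
  | none =>
    simp only [Fixes, dirVec, funext_iff, Fin.forall_fin_two]
    simp [eq_comm (a := (0 : E))]
  | some x =>
    simp only [Fixes, dirVec, funext_iff, Fin.forall_fin_two]
    simp [mul_comm _ x, eq_comm]

/-- The orbit-counting identity, summed over points of the line rather than over group elements. -/
lemma card_orbits_mul_card [Finite F] [Fintype E] :
    Nat.card (Quot (glOrbitRel F E)) * Nat.card (GL (Fin 2) F) =
    ∑ o : Option E, Nat.card {g : GL (Fin 2) F // Fixes g o} := by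
  rw [card_quot_glOrbitRel, ← Nat.card_prod,
    ← Nat.card_congr (MulAction.sigmaFixedByEquivOrbitsProdGroup (GL (Fin 2) F) (ProjLine E)),
    ← Nat.card_sigma]
  refine (Nat.card_congr ?_)
  calc (Σ g : GL (Fin 2) F, MulAction.fixedBy (ProjLine E) g)
      ≃ {p : GL (Fin 2) F × ProjLine E // p.1 • p.2 = p.2} :=
        (Equiv.subtypeProdEquivSigmaSubtype _).symm
    _ ≃ {p : Option E × GL (Fin 2) F // Fixes p.2 p.1} :=
        (((Equiv.prodComm _ _).trans ((Equiv.ofBijective _ line_bijective).symm.prodCongr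
          (Equiv.refl _)))).subtypeEquiv fun p => by
            rw [← smul_line_iff]
            simp [Equiv.ofBijective_apply_symm_apply]
    _ ≃ Σ o : Option E, {g : GL (Fin 2) F // Fixes g o} :=
        Equiv.subtypeProdEquivSigmaSubtype (fun (o : Option E) g => Fixes g o)

end

/-! ### The orbit count -/

/-- The orbit-counting identity after substitution of all stabilizer orders, divided
by `q (q - 1)`. -/
lemma card_orbits_eq (F E : Type*) [Field F] [Finite F] [Field E] [Algebra F E] [Finite E]
    (N : ℕ) (hN : 1 ≤ N) (hNE : Module.finrank F E = N) :
    (Nat.card (Quot (glOrbitRel F E)) : ℤ) * ((Nat.card F : ℤ) ^ 2 - 1) =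
      (Nat.card F : ℤ) ^ (N - 1) + Nat.card {x : E // IsQuad F x} + (Nat.card F : ℤ) ^ 2
        - Nat.card F - 2 := by
  classical
  have := Fintype.ofFinite E
  have := Fintype.ofFinite F
  have hq : 1 < Nat.card F := Finite.one_lt_card
  have hGL : (Nat.card (GL (Fin 2) F) : ℤ) =
      ((Nat.card F : ℤ) ^ 2 - 1) * ((Nat.card F : ℤ) ^ 2 - Nat.card F) := by
    rw [Matrix.card_GL_field, Fin.prod_univ_two, ← Nat.card_eq_fintype_card]
    simp only [Fin.val_zero, Fin.val_one, pow_zero, pow_one]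
    rw [Nat.cast_mul, Nat.cast_sub (Nat.one_le_pow _ _ (by omega)),
      Nat.cast_sub (by nlinarith)]
    push_cast
    ring
  have hE : (Fintype.card E : ℤ) = Nat.card F * (Nat.card F : ℤ) ^ (N - 1) := by
    rw [← Nat.card_eq_fintype_card, Module.natCard_eq_pow_finrank (K := F), hNE, ← pow_succ',
      Nat.sub_add_cancel hN]
    push_cast
    rfl
  have hF := card_range_algebraMap (F := F) (E := E)
  rw [Nat.card_eq_fintype_card, Fintype.card_subtype] at hF
  have hsum := card_orbits_mul_card (F := F) (E := E)
  rw [Fintype.sum_option, card_fixes_none] at hsum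
  have hfix : ∀ x : E, (Nat.card {g : GL (Fin 2) F // Fixes g (some x)} : ℤ) =
      ((Nat.card F : ℤ) - 1) +
        (if IsQuad F x then (Nat.card F : ℤ) ^ 2 - Nat.card F else 0) +
        (if x ∈ Set.range (algebraMap F E) then
          (Nat.card F : ℤ) * (Nat.card F - 1) ^ 2 - ((Nat.card F : ℤ) ^ 2 - 1) else 0) := by
    intro x
    by_cases hx : IsQuad F x
    · by_cases hxF : x ∈ Set.range (algebraMap F E)
      · rw [if_pos hx, if_pos hxF]
        obtain ⟨y, rfl⟩ := hxF
        rw [card_fixes_algebraMap]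
        push_cast [Nat.cast_sub hq.le]
        ring
      · rw [if_pos hx, if_neg hxF, card_fixes_of_isQuad hx hxF,
          Nat.cast_sub (Nat.one_le_pow _ _ (by omega))]
        push_cast
        ring
    · have hxF : x ∉ Set.range (algebraMap F E) := by
        rintro ⟨a, rfl⟩
        exact hx (isQuad_algebraMap a)
      rw [if_neg hx, if_neg hxF, card_fixes_of_not_isQuad hx, Nat.cast_sub hq.le]
      simp
  have hsum' := congrArg (Nat.cast : ℕ → ℤ) hsum
  rw [Nat.cast_mul, hGL, Nat.cast_add, Nat.cast_sum, Finset.sum_congr rfl fun x _ => hfix x,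
    Finset.sum_add_distrib, Finset.sum_add_distrib, ← Finset.sum_filter, ← Finset.sum_filter] at hsum'
  simp only [Finset.sum_const, hF, nsmul_eq_mul, Finset.card_univ, hE] at hsum'
  rw [← Fintype.card_subtype, ← Nat.card_eq_fintype_card (α := {x : E // IsQuad F x})] at hsum'
  push_cast [Nat.cast_sub hq.le] at hsum'
  have hq' : (1 : ℤ) < Nat.card F := by exact_mod_cast hq
  have hne : (Nat.card F : ℤ) * (Nat.card F - 1) ≠ 0 :=
    mul_ne_zero (by omega) (by omega)
  apply mul_left_cancel₀ hne
  linear_combination hsum'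

theorem stmt_4 (F E : Type*) [Field F] [Fintype F] [Field E] [Algebra F E]
    (q N : ℕ) (hq : q = Fintype.card F) (hN : 1 ≤ N)
    (hNE : Module.finrank F E = N) :
    (Odd N →
      Nat.card (Quot (glOrbitRel F E)) * (q ^ 2 - 1) + 2 = q ^ (N - 1) + q ^ 2) ∧
    (Even N →
      Nat.card (Quot (glOrbitRel F E)) * (q ^ 2 - 1) + q + 2
        = q ^ (N - 1) + 2 * q ^ 2) := by
  have : Module.Finite F E := Module.finite_of_finrank_pos (by omega)
  have : Finite E := Module.finite_of_finite F
  have hmain := card_orbits_eq F E N hN hNE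
  have hqc : Nat.card F = q := by rw [hq, Nat.card_eq_fintype_card]
  have hq1 : 1 ≤ q ^ 2 := Nat.one_le_pow _ _ (hq ▸ Fintype.card_pos)
  constructor
  · intro hodd
    rw [card_isQuad_of_odd (hNE ▸ hodd), hqc] at hmain
    zify [hq1]
    linear_combination hmain
  · intro heven
    rw [card_isQuad_of_even (hNE ▸ heven), hqc] at hmain
    zify [hq1]
    push_cast at hmain
    linear_combination hmain
end

section
/- Let L be a quadratic field extension of F and let ι : L → M₂(F) be an F-algebra embedding, so that T := ι(L^×) is a subgroup of GL₂(F). Then the number of orbits of T acting on ℙ¹(E) equals (q^N + 1)/(q + 1) when N is odd, and equals (q^N + 2q + 1)/(q + 1) when N is even (in each case the stated expression is an integer). -/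
/-!
The proof applies Burnside's lemma to `Lˣ` acting on `ℙ¹(E)` through `ι`.

Each of the `q - 1` elements of `Fˣ` acts as a scalar and fixes all `q ^ N + 1` lines
(`card_projLine`, `card_fixedBy_of_mem`). Any other `g` generates `L` over `F`, and the
characteristic polynomial of `ι g` is the minimal polynomial of `g`, so the eigenvalues of `ι g`
in `E` are the `f g` for the `F`-embeddings `f : L → E`. The lower left entry of `ι g` is nonzero,
hence every fixed line has the form `[z : 1]` and corresponds to exactly one eigenvalue, so `g`
fixes as many lines as there are embeddings (`card_fixedBy_of_not_mem`).

There are `q ^ 2 - q` such `g` and `|Lˣ| = q ^ 2 - 1`. Dividing Burnside's identity by `q - 1`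
gives `#orbits * (q + 1) = q ^ N + 1 + q * #(L →ₐ[F] E)` (`card_orbits_mul`). Since `[L : F] = 2`,
there are two embeddings when `N` is even and none when `N` is odd.
-/

open Matrix

/-- The orbit relation on `ℙ¹(E)` for the action of the torus
`T = ι(L^×) ≤ GL₂(F)` through the entrywise inclusion `F ↪ E`. -/
def torusOrbitRel (F E L : Type*) [Field F] [Field E] [Algebra F E]
    [Field L] [Algebra F L] (ι : L →ₐ[F] Matrix (Fin 2) (Fin 2) F)
    (W₁ W₂ : ProjLine E) : Prop :=
  ∃ x : L, x ≠ 0 ∧ matActs ((ι x).map (algebraMap F E)) W₁.1 = W₂.1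

noncomputable section
variable {F E L : Type*} [Field F] [Field E] [Algebra F E] [Field L] [Algebra F L]

/-! ### The torus action -/

/-- The embedding `ι` followed by the entrywise inclusion `M₂(F) → M₂(E)`. -/
def torusHom (E : Type*) [Field E] [Algebra F E] (ι : L →ₐ[F] Matrix (Fin 2) (Fin 2) F) :
    L →+* Matrix (Fin 2) (Fin 2) E :=
  (algebraMap F E).mapMatrix.comp ι.toRingHom

lemma torusHom_apply (ι : L →ₐ[F] Matrix (Fin 2) (Fin 2) F) (x : L) :
    torusHom E ι x = (ι x).map (algebraMap F E) := rfl

lemma finrank_matActs {A : Matrix (Fin 2) (Fin 2) E} (hA : IsUnit A)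
    (W : Submodule E (Fin 2 → E)) :
    Module.finrank E (matActs A W) = Module.finrank E W := by
  have hinj : Function.Injective (Matrix.toLin' A) := by
    rw [Matrix.toLin'_apply']
    exact Matrix.mulVec_injective_of_isUnit hA
  exact (Submodule.equivMapOfInjective _ hinj W).finrank_eq.symm

lemma matActs_mul (A B : Matrix (Fin 2) (Fin 2) E) (W : Submodule E (Fin 2 → E)) :
    matActs (A * B) W = matActs A (matActs B W) := by
  simp [matActs, Matrix.toLin'_mul, Submodule.map_comp]

/-- The action of `Lˣ` on `ℙ¹(E)` through `ι`; its orbits are those of the torus `ι(Lˣ)`. -/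
@[reducible] def torusAction (E : Type*) [Field E] [Algebra F E]
    (ι : L →ₐ[F] Matrix (Fin 2) (Fin 2) F) : MulAction Lˣ (ProjLine E) where
  smul g W := ⟨matActs (torusHom E ι g) W.1,
    (finrank_matActs (g.isUnit.map (torusHom E ι)) W.1).trans W.2⟩
  one_smul W := Subtype.ext <| by
    change matActs (torusHom E ι ((1 : Lˣ) : L)) W.1 = W.1
    simp [matActs]
  mul_smul g h W := Subtype.ext <| by
    change matActs (torusHom E ι ((g * h : Lˣ) : L)) W.1 = matActs _ (matActs _ W.1)
    rw [Units.val_mul, map_mul, matActs_mul]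

lemma card_quot (ι : L →ₐ[F] Matrix (Fin 2) (Fin 2) F) :
    letI := torusAction E ι
    Nat.card (Quot (torusOrbitRel F E L ι)) =
      Nat.card (MulAction.orbitRel.Quotient Lˣ (ProjLine E)) := by
  let := torusAction E ι
  refine Nat.card_congr (Quot.congrRight fun W₁ W₂ => ?_)
  change _ ↔ MulAction.orbitRel Lˣ (ProjLine E) W₁ W₂
  rw [Setoid.comm', MulAction.orbitRel_apply]
  constructor
  · rintro ⟨x, hx, h⟩
    exact ⟨Units.mk0 x hx, Subtype.ext h⟩
  · rintro ⟨g, h⟩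
    exact ⟨g, g.ne_zero, congrArg Subtype.val h⟩

/-! ### Points of the projective line and their images -/

/-- The point `[z : 1]` of `ℙ¹(E)`. -/
def affinePt (z : E) : ProjLine E :=
  ⟨E ∙ ![z, 1], finrank_span_singleton fun h => by simpa using congrFun h 1⟩

/-- The point `[1 : 0]` of `ℙ¹(E)`. -/
def inftyPt (E : Type*) [Field E] : ProjLine E :=
  ⟨E ∙ ![1, 0], finrank_span_singleton fun h => by simpa using congrFun h 0⟩

lemma mem_affinePt {z : E} {v : Fin 2 → E} : v ∈ (affinePt z).1 ↔ v 0 = v 1 * z := by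
  refine Submodule.mem_span_singleton.trans ⟨?_, fun h => ⟨v 1, ?_⟩⟩
  · rintro ⟨a, rfl⟩
    simp
  · ext i; fin_cases i <;> simp [h]

lemma mem_inftyPt {v : Fin 2 → E} : v ∈ (inftyPt E).1 ↔ v 1 = 0 := by
  refine Submodule.mem_span_singleton.trans ⟨?_, fun h => ⟨v 0, ?_⟩⟩
  · rintro ⟨a, rfl⟩
    simp
  · ext i; fin_cases i <;> simp [h]

lemma eq_of_le {W₁ W₂ : ProjLine E} (h : W₁.1 ≤ W₂.1) : W₁ = W₂ :=
  Subtype.ext (Submodule.eq_of_le_of_finrank_eq h (W₁.2.trans W₂.2.symm))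

lemma bijective_pts : Function.Bijective
    (fun o : Option E => o.elim (inftyPt E) affinePt) := by
  constructor
  · rintro (_ | z) (_ | w) h
    · rfl
    · have : ![1, 0] ∈ (affinePt w).1 := by
        rw [← show inftyPt E = affinePt w from h, mem_inftyPt]; simp
      simp [mem_affinePt] at this
    · have : ![1, 0] ∈ (affinePt z).1 := by
        rw [show affinePt z = inftyPt E from h, mem_inftyPt]; simp
      simp [mem_affinePt] at this
    · have : ![z, 1] ∈ (affinePt w).1 := by
        rw [← show affinePt z = affinePt w from h, mem_affinePt]; simp
      simpa [mem_affinePt] using this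
  · intro W
    obtain ⟨v, hv, hW⟩ := finrank_eq_one_iff'.1 W.2
    by_cases h : (v : Fin 2 → E) 1 = 0
    · refine ⟨none, (eq_of_le fun w hw => ?_).symm⟩
      obtain ⟨c, hc⟩ := hW ⟨w, hw⟩
      have : w = c • (v : Fin 2 → E) := (congrArg Subtype.val hc).symm
      change w ∈ (inftyPt E).1
      rw [mem_inftyPt, this]; simp [h]
    · refine ⟨some ((v : Fin 2 → E) 0 / (v : Fin 2 → E) 1), (eq_of_le fun w hw => ?_).symm⟩
      obtain ⟨c, hc⟩ := hW ⟨w, hw⟩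
      have : w = c • (v : Fin 2 → E) := (congrArg Subtype.val hc).symm
      change w ∈ (affinePt _).1
      rw [mem_affinePt, this]
      simp; field_simp

lemma card_projLine [Finite E] : Nat.card (ProjLine E) = Nat.card E + 1 := by
  rw [← Nat.card_eq_of_bijective _ bijective_pts, Finite.card_option]

lemma matActs_inftyPt {A : Matrix (Fin 2) (Fin 2) E} (hc : A 1 0 ≠ 0) :
    matActs A (inftyPt E).1 ≠ (inftyPt E).1 := by
  intro h
  have : Matrix.toLin' A ![1, 0] ∈ (inftyPt E).1 := by
    rw [← h]; exact Submodule.mem_map_of_mem (mem_inftyPt.2 (by simp))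
  rw [mem_inftyPt] at this
  simp [Matrix.mulVec, dotProduct, Fin.sum_univ_two] at this
  exact hc this

lemma matActs_affinePt {A : Matrix (Fin 2) (Fin 2) E} (hA : IsUnit A) (z : E) :
    matActs A (affinePt z).1 = (affinePt z).1 ↔
      A 1 0 * z ^ 2 + (A 1 1 - A 0 0) * z - A 0 1 = 0 := by
  have key : Matrix.toLin' A ![z, 1] ∈ (affinePt z).1 ↔
      A 1 0 * z ^ 2 + (A 1 1 - A 0 0) * z - A 0 1 = 0 := by
    rw [mem_affinePt]
    simp [Matrix.mulVec, dotProduct, Fin.sum_univ_two]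
    constructor <;> intro h <;> linear_combination -h
  rw [← key]
  constructor
  · intro h
    have := Submodule.mem_map_of_mem (f := Matrix.toLin' A)
      (mem_affinePt.2 (by simp) : ![z, 1] ∈ (affinePt z).1)
    exact h ▸ this
  · intro h
    refine Submodule.eq_of_le_of_finrank_eq ?_ (finrank_matActs hA _)
    refine (Submodule.map_span_le _ _ _).2 ?_
    rintro _ rfl
    exact h

/-- If the lower left entry vanished, `ι x` would be triangular with diagonal entries `a, d ∈ F`,
and `(x - a) * (x - d) = 0` would force `x ∈ F`. -/
lemma lower_left_ne_zero (ι : L →ₐ[F] Matrix (Fin 2) (Fin 2) F) {x : L}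
    (hx : ∀ a : F, algebraMap F L a ≠ x) : ι x 1 0 ≠ 0 := by
  intro hc
  have h0 : ι ((x - algebraMap F L (ι x 0 0)) * (x - algebraMap F L (ι x 1 1))) = 0 := by
    rw [map_mul, map_sub, map_sub, AlgHom.commutes, AlgHom.commutes]
    ext i j
    fin_cases i <;> fin_cases j <;>
      simp [Matrix.mul_apply, Fin.sum_univ_two, hc, Matrix.algebraMap_matrix_apply]
  rw [map_eq_zero_iff ι ι.toRingHom.injective, mul_eq_zero, sub_eq_zero, sub_eq_zero] at h0
  rcases h0 with h | h
  · exact hx _ h.symm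
  · exact hx _ h.symm

/-! ### Fixed lines of torus elements -/

/-- A non-scalar element of `L` has degree at least two over `F`, so by Cayley-Hamilton its minimal
polynomial is the characteristic polynomial of its image in `M₂(F)`. -/
lemma minpoly_eq_charpoly [FiniteDimensional F L] (ι : L →ₐ[F] Matrix (Fin 2) (Fin 2) F) {x : L}
    (hx : ∀ a : F, algebraMap F L a ≠ x) : minpoly F x = (ι x).charpoly := by
  have hint : IsIntegral F x := Algebra.IsIntegral.isIntegral x
  have hdvd : minpoly F x ∣ (ι x).charpoly := by
    apply minpoly.dvd
    apply ι.toRingHom.injective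
    change ι _ = ι 0
    rw [← Polynomial.aeval_algHom_apply, Matrix.aeval_self_charpoly, map_zero]
  have h2 : 2 ≤ (minpoly F x).natDegree :=
    (minpoly.two_le_natDegree_iff hint).2 fun ⟨a, ha⟩ => hx a ha
  refine (Polynomial.eq_of_monic_of_dvd_of_natDegree_le (minpoly.monic hint)
    (Matrix.charpoly_monic _) hdvd ?_).symm
  rw [Matrix.charpoly_natDegree_eq_dim]
  simpa using h2

/-- As a non-scalar `x` generates the quadratic extension `L`, evaluation at `x` identifies the
`F`-embeddings of `L` into `E` with the eigenvalues of `ι x` in `E`. -/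
lemma algHom_eval_injective_and_exists_iff (hL : Module.finrank F L = 2)
    (ι : L →ₐ[F] Matrix (Fin 2) (Fin 2) F) {x : L} (hx : ∀ a : F, algebraMap F L a ≠ x) :
    Function.Injective (fun f : L →ₐ[F] E => f x) ∧
    ∀ y : E, (∃ f : L →ₐ[F] E, f x = y) ↔ Polynomial.aeval y (ι x).charpoly = 0 := by
  have : FiniteDimensional F L := Module.finite_of_finrank_pos (by omega)
  have hmin := minpoly_eq_charpoly ι hx
  have hint : IsIntegral F x := Algebra.IsIntegral.isIntegral x
  have htop : IntermediateField.adjoin F {x} = ⊤ := by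
    rw [Field.primitive_element_iff_minpoly_natDegree_eq, hmin,
      Matrix.charpoly_natDegree_eq_dim, hL]
    simp
  have htop' : Algebra.adjoin F {x} = ⊤ := by
    rw [← IntermediateField.adjoin_simple_toSubalgebra_of_isAlgebraic hint.isAlgebraic, htop]
    rfl
  constructor
  · intro f g h
    exact AlgHom.ext_of_adjoin_eq_top htop' (by rintro _ rfl; exact h)
  · intro y
    constructor
    · rintro ⟨f, rfl⟩
      rw [Polynomial.aeval_algHom_apply, ← hmin, minpoly.aeval, map_zero]
    · intro hy
      let pb := PowerBasis.ofAdjoinEqTop hint htop'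
      have hgen : pb.gen = x := PowerBasis.ofAdjoinEqTop_gen hint htop'
      have hroot : Polynomial.aeval y (minpoly F pb.gen) = 0 := by rw [hgen, hmin, hy]
      exact ⟨pb.lift y hroot, (congrArg _ hgen.symm).trans (pb.lift_gen y hroot)⟩

/-- A non-scalar element of the torus fixes exactly one line for each `F`-embedding `f` of `L` into
`E`: the eigenline for the eigenvalue `f g`. -/
lemma card_fixedBy_of_not_mem (hL : Module.finrank F L = 2)
    (ι : L →ₐ[F] Matrix (Fin 2) (Fin 2) F) {g : Lˣ} (hg : ∀ a : F, algebraMap F L a ≠ g) :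
    letI := torusAction E ι
    Nat.card (MulAction.fixedBy (ProjLine E) g) = Nat.card (L →ₐ[F] E) := by
  let := torusAction E ι
  symm
  have hc : ι g 1 0 ≠ 0 := lower_left_ne_zero ι hg
  have hcE : algebraMap F E (ι g 1 0) ≠ 0 := by simpa using hc
  obtain ⟨hinj, hex⟩ := algHom_eval_injective_and_exists_iff (E := E) hL ι hg
  have hunit := g.isUnit.map (torusHom E ι)
  -- With `c = A 1 0`, `d = A 1 1`: `A` sends `(z, 1)` to a vector with second coordinate `cz + d`,
  -- so the line `[z : 1]` is fixed exactly when `cz + d` is an eigenvalue of `A`.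
  have hroot (z : E) : affinePt z ∈ MulAction.fixedBy (ProjLine E) g ↔
      Polynomial.aeval (algebraMap F E (ι g 1 0) * z + algebraMap F E (ι g 1 1))
        (ι g).charpoly = 0 := by
    refine Subtype.ext_iff.trans ?_
    refine (matActs_affinePt hunit z).trans ?_
    rw [Matrix.charpoly_fin_two, Matrix.trace_fin_two, Matrix.det_fin_two,
      ← mul_right_inj' hcE, mul_zero]
    simp only [torusHom_apply, Matrix.map_apply, map_sub, map_add, map_mul, map_pow,
      Polynomial.aeval_X, Polynomial.aeval_C]
    constructor <;> intro h <;> linear_combination h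
  let z (f : L →ₐ[F] E) : E := (f g - algebraMap F E (ι g 1 1)) / algebraMap F E (ι g 1 0)
  have hz (f : L →ₐ[F] E) :
      algebraMap F E (ι g 1 0) * z f + algebraMap F E (ι g 1 1) = f g := by
    simp only [z]; field_simp; ring
  refine Nat.card_eq_of_bijective
    (fun f : L →ₐ[F] E => (⟨affinePt (z f), ?_⟩ : MulAction.fixedBy (ProjLine E) g)) ⟨?_, ?_⟩
  · rw [hroot, hz, ← hex]; exact ⟨f, rfl⟩
  · intro f f' h
    have h1 : some (z f) = some (z f') := bijective_pts.1 (congrArg Subtype.val h)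
    apply hinj
    change f g = f' g
    rw [← hz f, ← hz f', Option.some.inj h1]
  · rintro ⟨W, hW⟩
    obtain ⟨o, rfl⟩ := bijective_pts.2 W
    rcases o with _ | w
    · exact absurd (congrArg Subtype.val hW) (matActs_inftyPt hcE)
    · obtain ⟨f, hf⟩ := (hex _).2 ((hroot w).1 hW)
      refine ⟨f, Subtype.ext (congrArg affinePt (mul_left_cancel₀ hcE ?_))⟩
      exact add_right_cancel ((hz f).trans hf)

lemma card_fixedBy_of_mem [Finite E] (ι : L →ₐ[F] Matrix (Fin 2) (Fin 2) F) {g : Lˣ} {a : F}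
    (ha : algebraMap F L a = g) :
    letI := torusAction E ι
    Nat.card (MulAction.fixedBy (ProjLine E) g) = Nat.card E + 1 := by
  let := torusAction E ι
  have hall : MulAction.fixedBy (ProjLine E) g = Set.univ := by
    refine Set.eq_univ_of_forall fun W => (eq_of_le ?_)
    have hA : torusHom E ι g = algebraMap E _ (algebraMap F E a) := by
      rw [torusHom_apply, ← ha, AlgHom.commutes]
      ext i j
      by_cases hij : i = j <;> simp [Matrix.algebraMap_matrix_apply, hij]
    change matActs (torusHom E ι g) W.1 ≤ W.1
    rintro _ ⟨v, hv, rfl⟩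
    rw [hA, Matrix.toLin'_apply, Algebra.algebraMap_eq_smul_one, Matrix.smul_mulVec, Matrix.one_mulVec]
    exact W.1.smul_mem _ hv
  rw [hall, Nat.card_congr (Equiv.Set.univ _), card_projLine]

lemma card_scalars : Nat.card {g : Lˣ // ∃ a : F, algebraMap F L a = g} = Nat.card Fˣ := by
  symm
  refine Nat.card_eq_of_bijective
    (fun a : Fˣ => ⟨Units.map (algebraMap F L).toMonoidHom a, a, rfl⟩) ⟨?_, ?_⟩
  · intro a b h
    exact Units.map_injective (algebraMap F L).injective (congrArg Subtype.val h)
  · rintro ⟨g, a, ha⟩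
    have : a ≠ 0 := by rintro rfl; exact g.ne_zero (by rw [← ha, map_zero])
    exact ⟨Units.mk0 a this, Subtype.ext (Units.ext ha)⟩

/-! ### Counting orbits -/

/-- Burnside's lemma for the torus, after cancelling the common factor `|F| - 1`. -/
lemma card_orbits_mul [Finite F] [Finite E] (hL : Module.finrank F L = 2)
    (ι : L →ₐ[F] Matrix (Fin 2) (Fin 2) F) :
    Nat.card (Quot (torusOrbitRel F E L ι)) * (Nat.card F + 1) =
      Nat.card E + 1 + Nat.card F * Nat.card (L →ₐ[F] E) := by
  classical
  let := torusAction E ι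
  have : FiniteDimensional F L := Module.finite_of_finrank_pos (by omega)
  have : Finite L := Module.finite_of_finite F
  have : Finite (ProjLine E) := Finite.of_surjective _ bijective_pts.2
  have := Fintype.ofFinite Lˣ
  have := Fintype.ofFinite (ProjLine E)
  have := Fintype.ofFinite (MulAction.orbitRel.Quotient Lˣ (ProjLine E))
  have hburn := MulAction.sum_card_fixedBy_eq_card_orbits_mul_card_group Lˣ (ProjLine E)
  set c := Nat.card (L →ₐ[F] E)
  set P : Lˣ → Prop := fun g => ∃ a : F, algebraMap F L a = g
  have hfix (g : Lˣ) : Fintype.card (MulAction.fixedBy (ProjLine E) g) =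
      if P g then Nat.card E + 1 else c := by
    rw [Fintype.card_eq_nat_card]
    split_ifs with h
    · obtain ⟨a, ha⟩ := h
      exact card_fixedBy_of_mem ι ha
    · exact card_fixedBy_of_not_mem hL ι fun a ha => h ⟨a, ha⟩
  have hP : (Finset.univ.filter P).card = Nat.card F - 1 := by
    rw [← Fintype.card_subtype, Fintype.card_eq_nat_card, card_scalars, Nat.card_units]
  have hcardL : Fintype.card Lˣ = Nat.card F ^ 2 - 1 := by
    rw [Fintype.card_eq_nat_card, Nat.card_units, Module.natCard_eq_pow_finrank (K := F), hL]
  have hsplit := Finset.card_filter_add_card_filter_not (s := (Finset.univ : Finset Lˣ)) P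
  rw [Finset.card_univ, hP, hcardL] at hsplit
  rw [Finset.sum_congr rfl fun g _ => hfix g, Finset.sum_ite, Finset.sum_const, Finset.sum_const,
    hP, hcardL, Fintype.card_eq_nat_card, ← card_quot, smul_eq_mul, smul_eq_mul] at hburn
  obtain ⟨r, hr⟩ : ∃ r, Nat.card F = r + 2 :=
    Nat.exists_eq_add_of_le' (Finite.one_lt_card (α := F))
  have hsq : Nat.card F ^ 2 - 1 = (r + 1) * (Nat.card F + 1) := by
    rw [hr]; apply Nat.sub_eq_of_eq_add; ring
  have hpred : Nat.card F - 1 = r + 1 := by omega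
  rw [hsq, hpred] at hsplit hburn
  have hnot : (Finset.univ.filter fun g => ¬ P g).card = (r + 1) * Nat.card F := by linarith
  rw [hnot] at hburn
  refine Nat.eq_of_mul_eq_mul_left (Nat.succ_pos r) ?_
  rw [Nat.succ_eq_add_one]
  linarith

end

theorem stmt_5 (F E L : Type*) [Field F] [Fintype F] [Field E] [Algebra F E]
    [Field L] [Algebra F L]
    (q N : ℕ) (hq : q = Fintype.card F) (hN : 1 ≤ N)
    (hNE : Module.finrank F E = N)
    (hL : Module.finrank F L = 2)
    (ι : L →ₐ[F] Matrix (Fin 2) (Fin 2) F) (hι : Function.Injective ι) :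
    (Odd N →
      Nat.card (Quot (torusOrbitRel F E L ι)) * (q + 1) = q ^ N + 1) ∧
    (Even N →
      Nat.card (Quot (torusOrbitRel F E L ι)) * (q + 1) = q ^ N + 2 * q + 1) := by
  have : FiniteDimensional F E := Module.finite_of_finrank_pos (by omega)
  have : Finite E := Module.finite_of_finite F
  have key := card_orbits_mul (E := E) hL ι
  rw [Module.natCard_eq_pow_finrank (K := F) (V := E), hNE,
    Nat.card_eq_fintype_card (α := F), ← hq] at key
  constructor
  · intro hodd
    have : IsEmpty (L →ₐ[F] E) := by
      rw [← not_nonempty_iff, FiniteField.nonempty_algHom_iff_finrank_dvd, hL, hNE,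
        ← even_iff_two_dvd, Nat.not_even_iff_odd]
      exact hodd
    simpa using key
  · intro heven
    rw [FiniteField.natCard_algHom_of_finrank_dvd (by rw [hL, hNE]; exact heven.two_dvd), hL] at key
    rw [key]
    ring
end

section
/- Let V ⊆ E be an F-linear subspace of dimension r, and let G be the subgroup of GL₂(E) consisting of the matrices [[a, b], [0, 1]] with a ∈ F^× and b ∈ V. Then the number of orbits of G acting on ℙ¹(E) equals 2 + (q^{N−r} − 1)/(q − 1) (this expression is an integer). -/
/-!
Identify `ℙ¹(E)` with `E ∪ {∞}`, where `x : E` is the line spanned by `(x, 1)` and `∞` the line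
spanned by `(1, 0)`. The matrix `[[a, b], [0, 1]]` fixes `∞` and acts on `E` by `x ↦ a x + b`.
Hence two points `x, y` of `E` lie in one orbit exactly when their images in `E ⧸ V` differ by a
factor in `Fˣ`. The orbits are therefore `{∞}`, the subspace `V`, and one orbit for each point of
the projective space `ℙ F (E ⧸ V)`, which has `(q ^ (N - r) - 1) / (q - 1)` points.
-/

open Matrix

/-- The orbit relation on `ℙ¹(E)` for the action of the group of matrices
`[[a, b], [0, 1]]` with `a ∈ F^×` and `b ∈ V`. -/
def affOrbitRel (F E : Type*) [Field F] [Field E] [Algebra F E]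
    (V : Submodule F E) (W₁ W₂ : ProjLine E) : Prop :=
  ∃ a : F, a ≠ 0 ∧ ∃ b ∈ V,
    matActs !![algebraMap F E a, b; 0, 1] W₁.1 = W₂.1

open scoped LinearAlgebra.Projectivization

/-- A spanning vector of the line with affine coordinate `s`, where `none` stands for `∞`. -/
def lineVec {E : Type*} [Field E] : Option E → (Fin 2 → E)
  | none => ![1, 0]
  | some x => ![x, 1]

lemma lineVec_ne_zero {E : Type*} [Field E] (s : Option E) : lineVec s ≠ 0 := by
  cases s with
  | none => intro h; simpa [lineVec] using congrFun h 0
  | some x => intro h; simpa [lineVec] using congrFun h 1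

/-- The line with affine coordinate `s`, where `none` stands for `∞`. -/
def lineOf {E : Type*} [Field E] (s : Option E) : ProjLine E :=
  ⟨Submodule.span E {lineVec s}, finrank_span_singleton (lineVec_ne_zero s)⟩

lemma span_lineVec_injective {E : Type*} [Field E] {s t : Option E}
    (h : Submodule.span E {lineVec s} = Submodule.span E {lineVec t}) : s = t := by
  have hs : lineVec s ∈ Submodule.span E {lineVec t} :=
    h ▸ Submodule.mem_span_singleton_self _
  have ht : lineVec t ∈ Submodule.span E {lineVec s} :=
    h ▸ Submodule.mem_span_singleton_self _
  obtain ⟨c, hc⟩ := Submodule.mem_span_singleton.mp hs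
  obtain ⟨d, hd⟩ := Submodule.mem_span_singleton.mp ht
  have hc0 := congrFun hc 0
  have hc1 := congrFun hc 1
  have hd1 := congrFun hd 1
  cases s <;> cases t <;> simp_all [lineVec]

lemma lineOf_bijective {E : Type*} [Field E] : Function.Bijective (lineOf (E := E)) := by
  refine ⟨fun s t h => span_lineVec_injective (congrArg Subtype.val h), ?_⟩
  rintro ⟨W, hW⟩
  obtain ⟨v, hv, hspan⟩ := finrank_eq_one_iff'.mp hW
  have hWv : W = Submodule.span E {(v : Fin 2 → E)} := by
    ext w
    rw [Submodule.mem_span_singleton]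
    constructor
    · intro hw
      obtain ⟨c, hc⟩ := hspan ⟨w, hw⟩
      exact ⟨c, congrArg Subtype.val hc⟩
    · rintro ⟨c, rfl⟩
      exact W.smul_mem c v.2
  have hv' : (v : Fin 2 → E) ≠ 0 := by simpa using hv
  -- `v` is a nonzero multiple of the normalised vector with the right affine coordinate.
  have key : ∃ s : Option E, ∃ c : E, c ≠ 0 ∧ (v : Fin 2 → E) = c • lineVec s := by
    by_cases h1 : (v : Fin 2 → E) 1 = 0
    · refine ⟨none, (v : Fin 2 → E) 0, fun h0 => hv' ?_, ?_⟩
      · ext i; fin_cases i <;> simp [h0, h1]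
      · ext i; fin_cases i <;> simp [lineVec, h1]
    · refine ⟨some ((v : Fin 2 → E) 0 / (v : Fin 2 → E) 1), (v : Fin 2 → E) 1, h1, ?_⟩
      ext i; fin_cases i
      · simp [lineVec]; field_simp
      · simp [lineVec]
  obtain ⟨s, c, hc, hvc⟩ := key
  refine ⟨s, Subtype.ext ?_⟩
  change Submodule.span E {lineVec s} = W
  rw [hWv, hvc, Submodule.span_singleton_smul_eq (IsUnit.mk0 c hc)]

lemma matActs_lineOf {E : Type*} [Field E] {a b : E} (ha : a ≠ 0) (s : Option E) :
    matActs !![a, b; 0, 1] (lineOf s).1 = (lineOf (s.map fun x => a * x + b)).1 := by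
  cases s with
  | none =>
    have : Matrix.toLin' !![a, b; 0, 1] (lineVec none) = a • lineVec none := by
      ext i; fin_cases i <;> simp [lineVec, Matrix.mulVec, dotProduct, Fin.sum_univ_two]
    simp only [matActs, lineOf, Submodule.map_span, Set.image_singleton, this, Option.map_none]
    exact Submodule.span_singleton_smul_eq (IsUnit.mk0 a ha) _
  | some x =>
    have : Matrix.toLin' !![a, b; 0, 1] (lineVec (some x)) = lineVec (some (a * x + b)) := by
      ext i; fin_cases i <;> simp [lineVec, Matrix.mulVec, dotProduct, Fin.sum_univ_two]
    simp only [matActs, lineOf, Submodule.map_span, Set.image_singleton, this, Option.map_some]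

lemma affOrbitRel_lineOf {F E : Type*} [Field F] [Field E] [Algebra F E] (V : Submodule F E)
    (s t : Option E) :
    affOrbitRel F E V (lineOf s) (lineOf t) ↔
      ∃ a : F, a ≠ 0 ∧ ∃ b ∈ V, s.map (fun x => algebraMap F E a * x + b) = t := by
  unfold affOrbitRel
  refine exists_congr fun a => and_congr_right fun ha => exists_congr fun b =>
    and_congr_right fun _ => ?_
  rw [matActs_lineOf (by simpa using ha)]
  exact ⟨fun h => lineOf_bijective.1 (Subtype.ext h), fun h => by rw [h]⟩

open Classical in
/-- The invariant classifying orbits: `none` for `∞`, `some none` for the points of `V`, and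
otherwise the point of `ℙ F (E ⧸ V)` given by the class modulo `V`. -/
noncomputable def orbitInv {F E : Type*} [Field F] [Field E] [Algebra F E] (V : Submodule F E) :
    Option E → Option (Option (ℙ F (E ⧸ V)))
  | none => none
  | some x => some (if h : V.mkQ x = 0 then none else some (Projectivization.mk F (V.mkQ x) h))

lemma orbitInv_surjective {F E : Type*} [Field F] [Field E] [Algebra F E] (V : Submodule F E) :
    Function.Surjective (orbitInv V) := by
  rintro (_ | _ | p)
  · exact ⟨none, rfl⟩
  · exact ⟨some 0, by simp [orbitInv]⟩
  · induction p using Projectivization.ind with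
    | h v hv =>
      obtain ⟨x, rfl⟩ := V.mkQ_surjective v
      exact ⟨some x, by simp only [orbitInv, dif_neg hv]⟩

lemma exists_affine_iff_mkQ {F E : Type*} [Field F] [Field E] [Algebra F E] (V : Submodule F E)
    (x y : E) (a : F) :
    (∃ b ∈ V, algebraMap F E a * x + b = y) ↔ a • V.mkQ x = V.mkQ y := by
  rw [← map_smul, eq_comm, Submodule.mkQ_apply, Submodule.mkQ_apply, Submodule.Quotient.eq,
    Algebra.smul_def]
  exact ⟨by rintro ⟨b, hb, rfl⟩; simpa using hb, fun h => ⟨_, h, by ring⟩⟩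

lemma orbitInv_eq_iff {F E : Type*} [Field F] [Field E] [Algebra F E] (V : Submodule F E)
    (s t : Option E) :
    orbitInv V s = orbitInv V t ↔ affOrbitRel F E V (lineOf s) (lineOf t) := by
  rw [affOrbitRel_lineOf]
  cases s with
  | none =>
    cases t with
    | none => exact ⟨fun _ => ⟨1, one_ne_zero, 0, V.zero_mem, rfl⟩, fun _ => rfl⟩
    | some y => simp [orbitInv]
  | some x =>
    cases t with
    | none => simp [orbitInv]
    | some y =>
      simp only [Option.map_some, Option.some.injEq, exists_affine_iff_mkQ, orbitInv]
      by_cases hx : V.mkQ x = 0 <;> by_cases hy : V.mkQ y = 0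
      · simp only [hx, hy, dite_true, smul_zero, true_iff]
        exact ⟨1, one_ne_zero, trivial⟩
      · simp only [hx, hy, dite_true, dite_false, smul_zero, reduceCtorEq, false_iff]
        rintro ⟨a, _, h⟩
        exact hy h.symm
      · simp only [hx, hy, dite_true, dite_false, reduceCtorEq, false_iff]
        rintro ⟨a, ha, h⟩
        exact (smul_ne_zero ha hx) h
      · simp only [hx, hy, dite_false, Option.some.injEq]
        rw [eq_comm, Projectivization.mk_eq_mk_iff]
        constructor
        · rintro ⟨a, ha⟩
          exact ⟨a, a.ne_zero, ha⟩
        · rintro ⟨a, ha, h⟩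
          exact ⟨Units.mk0 a ha, h⟩

/-- The orbits are `∞`, the subspace `V`, and the points of `ℙ F (E ⧸ V)`. -/
lemma card_orbits {F E : Type*} [Field F] [Field E] [Algebra F E] (V : Submodule F E) :
    Nat.card (Quot (affOrbitRel F E V)) = Nat.card (Option (Option (ℙ F (E ⧸ V)))) := by
  let e : Option E ≃ ProjLine E := Equiv.ofBijective lineOf lineOf_bijective
  have he : ∀ W, lineOf (e.symm W) = W := e.apply_symm_apply
  have hrel : ∀ W₁ W₂, orbitInv V (e.symm W₁) = orbitInv V (e.symm W₂) ↔
      affOrbitRel F E V W₁ W₂ := fun W₁ W₂ => by rw [orbitInv_eq_iff, he, he]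
  refine Nat.card_eq_of_bijective
    (Quot.lift (fun W => orbitInv V (e.symm W)) fun W₁ W₂ h => (hrel W₁ W₂).2 h) ⟨?_, ?_⟩
  · rintro ⟨W₁⟩ ⟨W₂⟩ h
    exact Quot.sound ((hrel W₁ W₂).1 h)
  · intro p
    obtain ⟨s, rfl⟩ := orbitInv_surjective V p
    exact ⟨Quot.mk _ (e s), by simp⟩

theorem stmt_6 (F E : Type*) [Field F] [Fintype F] [Field E] [Algebra F E]
    (q N r : ℕ) (hq : q = Fintype.card F) (hN : 1 ≤ N)
    (hNE : Module.finrank F E = N)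
    (V : Submodule F E) (hV : Module.finrank F V = r) (hr : r ≤ N) :
    Nat.card (Quot (affOrbitRel F E V)) * (q - 1) + 1
      = q ^ (N - r) + 2 * (q - 1) := by
  have : FiniteDimensional F E := Module.finite_of_finrank_pos (by omega)
  have : Finite (E ⧸ V) := Module.finite_of_finite F
  have hquot : Module.finrank F (E ⧸ V) = N - r := by
    have := V.finrank_quotient_add_finrank
    omega
  have hcard : Nat.card (E ⧸ V) = q ^ (N - r) := by
    rw [Module.natCard_eq_pow_finrank (K := F), hquot, Nat.card_eq_fintype_card, hq]
  have hP := Projectivization.card F (E ⧸ V)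
  rw [hcard, Nat.card_eq_fintype_card (α := F), ← hq] at hP
  have hpos : 0 < q ^ (N - r) := pow_pos (hq ▸ Fintype.card_pos) _
  rw [card_orbits, Finite.card_option, Finite.card_option, add_mul, add_mul, ← hP]
  omega
end

section
/- Let A ∈ GL₂(F) be a matrix whose characteristic polynomial is irreducible over F. Then the number of points of ℙ¹(E) fixed by A (under the action of GL₂(F) on ℙ¹(E)) equals 2 if N is even, and equals 0 if N is odd. -/
/-!
A line of `E²` fixed by `A` is spanned by an eigenvector of `A` over `E`. Since the characteristic
polynomial `χ` of `A = (a b; c d)` is irreducible of degree `2`, it has no root in `F`, so `c ≠ 0`,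
and every eigenline is spanned by exactly one vector of the form `(x - d, c)`, which is an
eigenvector (of eigenvalue `x`) precisely when `χ x = 0`. The fixed lines therefore correspond
bijectively to the roots of `χ` in `E` (`natCard_fixed_eq_natCard_rootSet`).

These roots correspond to the `F`-embeddings into `E` of the quadratic extension `F[X]/(χ)`. By the
theory of finite fields there are `2` of them if `2 ∣ N`, and none otherwise
(`natCard_rootSet_of_irreducible`).
-/

open Matrix

open Polynomial

/-- The roots of `f` in `E` are the embeddings of `F[X]/(f)` into `E`, which exist exactly when the
degrees divide; their number is then maximal because `F[X]/(f)` is Galois over `F`. -/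
theorem natCard_rootSet_of_irreducible {F E : Type*} [Field F] [Field E] [Finite E] [Algebra F E]
    {f : F[X]} (hf : Irreducible f) :
    Nat.card (f.rootSet E) = if f.natDegree ∣ Module.finrank F E then f.natDegree else 0 := by
  have : Fact (Irreducible f) := ⟨hf⟩
  have hrank : Module.finrank F (AdjoinRoot f) = f.natDegree := by
    rw [(AdjoinRoot.powerBasis hf.ne_zero).finrank, AdjoinRoot.powerBasis_dim]
  have hcard : Nat.card (f.rootSet E) = Nat.card (AdjoinRoot f →ₐ[F] E) := by
    refine Nat.card_congr ((Equiv.subtypeEquivRight fun x ↦ ?_).trans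
      (AdjoinRoot.equiv E F f hf.ne_zero).symm)
    rw [mem_rootSet, mem_aroots]
  rw [hcard]
  split_ifs with h
  · rw [FiniteField.natCard_algHom_of_finrank_dvd (by rwa [hrank]), hrank]
  · have : IsEmpty (AdjoinRoot f →ₐ[F] E) := by
      rw [← not_nonempty_iff, FiniteField.nonempty_algHom_iff_finrank_dvd, hrank]
      exact h
    exact Nat.card_of_isEmpty

/-- If `c = 0`, then `d` is a root of the characteristic polynomial of `(a b; c d)`. -/
theorem lower_left_ne_zero_s8 {F : Type*} [Field F] (M : Matrix (Fin 2) (Fin 2) F)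
    (hM : Irreducible M.charpoly) : M 1 0 ≠ 0 := by
  intro h
  have hroot : M.charpoly.IsRoot (M 1 1) := by
    simp [charpoly_fin_two, IsRoot, trace_fin_two, det_fin_two, h]
    ring
  have h1 := natDegree_eq_of_degree_eq_some (degree_eq_one_of_irreducible_of_root hM hroot)
  rw [M.charpoly_natDegree_eq_dim, Fintype.card_fin] at h1
  exact absurd h1 (by decide)

theorem mem_rootSet_charpoly_iff {F E : Type*} [Field F] [Field E] [Algebra F E]
    (M : Matrix (Fin 2) (Fin 2) F) (x : E) :
    x ∈ M.charpoly.rootSet E ↔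
      x * (x - algebraMap F E (M 1 1)) =
        algebraMap F E (M 0 0) * (x - algebraMap F E (M 1 1))
          + algebraMap F E (M 0 1) * algebraMap F E (M 1 0) := by
  rw [mem_rootSet, and_iff_right M.charpoly_monic.ne_zero]
  simp only [charpoly_fin_two, trace_fin_two, det_fin_two, map_add, map_sub, map_mul, map_pow,
    aeval_X, aeval_C]
  constructor <;> intro h <;> linear_combination h

theorem matActs_span_singleton {E : Type*} [Field E] (B : Matrix (Fin 2) (Fin 2) E)
    (v : Fin 2 → E) : matActs B (Submodule.span E {v}) = Submodule.span E {B *ᵥ v} := by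
  rw [matActs, Submodule.map_span, Set.image_singleton, toLin'_apply]

/-- A root `x` of the characteristic polynomial corresponds to the line spanned by the eigenvector
`(x - d, c)`. -/
theorem natCard_fixed_eq_natCard_rootSet {F E : Type*} [Field F] [Field E] [Algebra F E]
    (M : Matrix (Fin 2) (Fin 2) F) (hdet : M.det ≠ 0) (hc : M 1 0 ≠ 0) :
    Nat.card {W : ProjLine E | matActs (M.map (algebraMap F E)) W.1 = W.1}
      = Nat.card (M.charpoly.rootSet E) := by
  have hc' : algebraMap F E (M 1 0) ≠ 0 := by simpa using hc
  have hdet' : algebraMap F E (M 0 0) * algebraMap F E (M 1 1)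
      - algebraMap F E (M 0 1) * algebraMap F E (M 1 0) ≠ 0 := by
    rw [det_fin_two] at hdet
    simpa only [← map_mul, ← map_sub, ne_eq, map_eq_zero] using hdet
  let v : E → Fin 2 → E := fun x ↦ ![x - algebraMap F E (M 1 1), algebraMap F E (M 1 0)]
  have hv (x : E) : v x ≠ 0 := fun h ↦ hc' (by simpa [v] using congrFun h 1)
  have heig (x : E) (hx : x ∈ M.charpoly.rootSet E) :
      M.map (algebraMap F E) *ᵥ v x = x • v x := by
    rw [mem_rootSet_charpoly_iff] at hx
    ext i
    fin_cases i
    · simpa [v, mulVec, dotProduct, Fin.sum_univ_two] using hx.symm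
    · simp [v, mulVec, dotProduct, Fin.sum_univ_two]
      ring
  have hne (x : E) (hx : x ∈ M.charpoly.rootSet E) : x ≠ 0 := by
    rintro rfl
    rw [mem_rootSet_charpoly_iff] at hx
    exact hdet' (by linear_combination hx)
  symm
  refine Nat.card_eq_of_bijective (fun x ↦ ⟨⟨Submodule.span E {v x.1},
    finrank_span_singleton (hv x.1)⟩, ?_⟩) ⟨?_, ?_⟩
  · change matActs _ (Submodule.span E {v x.1}) = Submodule.span E {v x.1}
    rw [matActs_span_singleton, heig x.1 x.2]
    exact Submodule.span_singleton_smul_eq (hne x.1 x.2).isUnit _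
  · intro x y hxy
    have hspan : Submodule.span E {v x.1} = Submodule.span E {v y.1} :=
      congrArg (fun W ↦ W.1.1) hxy
    obtain ⟨t, ht⟩ := Submodule.mem_span_singleton.1
      (hspan ▸ Submodule.mem_span_singleton_self (v x.1))
    -- The second coordinates agree and are nonzero, so the proportionality factor is `1`.
    have h1 : t = 1 := by simpa [v, hc'] using congrFun ht 1
    have h0 := congrFun ht 0
    simp [v, h1] at h0
    exact Subtype.ext h0.symm
  · rintro ⟨⟨W, hW⟩, hfix⟩
    change matActs _ W = W at hfix
    obtain ⟨w, hw0, hw⟩ : ∃ w : Fin 2 → E, w ≠ 0 ∧ W = Submodule.span E {w} := by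
      obtain ⟨w, hw0, hw⟩ := finrank_eq_one_iff'.1 hW
      refine ⟨w.1, by simpa using hw0, le_antisymm (fun u hu ↦ ?_) ?_⟩
      · obtain ⟨t, ht⟩ := hw ⟨u, hu⟩
        exact Submodule.mem_span_singleton.2 ⟨t, congrArg Subtype.val ht⟩
      · simp
    rw [hw, matActs_span_singleton] at hfix
    obtain ⟨x, hx⟩ := Submodule.mem_span_singleton.1
      (hfix ▸ Submodule.mem_span_singleton_self (M.map (algebraMap F E) *ᵥ w))
    have e0 := congrFun hx 0
    have e1 := congrFun hx 1
    simp only [Pi.smul_apply, smul_eq_mul, mulVec, dotProduct, Fin.sum_univ_two, map_apply]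
      at e0 e1
    have hw1 : w 1 ≠ 0 := by
      intro h
      have : w 0 = 0 := by simpa [h, hc'] using e1
      exact hw0 (by ext i; fin_cases i <;> simp [this, h])
    have hroot : x ∈ M.charpoly.rootSet E := by
      rw [mem_rootSet_charpoly_iff]
      apply mul_right_cancel₀ hw1
      linear_combination algebraMap F E (M 1 0) * e0 + (x - algebraMap F E (M 0 0)) * e1
    refine ⟨⟨x, hroot⟩, Subtype.ext (Subtype.ext ?_)⟩
    change Submodule.span E {v x} = W
    have hvw : v x = (algebraMap F E (M 1 0) / w 1) • w := by
      ext i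
      fin_cases i
      · simp [v]
        field_simp
        linear_combination e1
      · simp [v, hw1]
    rw [hw, hvw]
    exact Submodule.span_singleton_smul_eq (div_ne_zero hc' hw1).isUnit _

theorem stmt_8 (F E : Type*) [Field F] [Fintype F] [Field E] [Algebra F E]
    (N : ℕ) (hN : 1 ≤ N) (hNE : Module.finrank F E = N)
    (A : GL (Fin 2) F)
    (hA : Irreducible (Matrix.charpoly (A : Matrix (Fin 2) (Fin 2) F))) :
    Nat.card {W : ProjLine E |
        matActs ((A : Matrix (Fin 2) (Fin 2) F).map (algebraMap F E)) W.1 = W.1}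
      = if Even N then 2 else 0 := by
  have : Module.Finite F E := Module.finite_of_finrank_pos (by lia)
  have : Finite E := Module.finite_of_finite F
  have hdet : (A : Matrix (Fin 2) (Fin 2) F).det ≠ 0 :=
    ((isUnit_iff_isUnit_det _).1 A.isUnit).ne_zero
  rw [natCard_fixed_eq_natCard_rootSet _ hdet (lower_left_ne_zero_s8 _ hA),
    natCard_rootSet_of_irreducible hA, charpoly_natDegree_eq_dim, Fintype.card_fin, hNE]
  simp only [even_iff_two_dvd]
end

section
/- Suppose [E : F] = 2. Let ℙ¹(F) ⊆ ℙ¹(E) denote the set of lines of E² that are spanned by a nonzero vector with both coordinates in F. Then the complement ℙ¹(E) ∖ ℙ¹(F) is a single orbit under the action of GL₂(F), and it has exactly q(q − 1) elements. -/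
/-!
A line of `E²` outside `ℙ¹(F)` is not the point at infinity `E·(1, 0)`, so it is `E·(x, 1)` for a
unique `x ∈ E`, and lying outside `ℙ¹(F)` means precisely `x ∉ F`. This identifies the complement
with `E ∖ F` (`affLine_injective`, `not_isFLine_iff`), which has `q² - q` elements.
In this coordinate `GL₂(F)` acts by Möbius transformations. If `x₀ ∉ F`, then `1, x₀` is an
`F`-basis of `E`. Hence `(a x₀ + b) / (c x₀ + d)` is defined and outside `F` as soon as
`ad - bc ≠ 0`, while each `x ∉ F` is `a x₀ + b` with `a ≠ 0`, so the upper triangular matrices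
already act transitively.
-/


open Matrix

/-- A line of `E²` lies in `ℙ¹(F) ⊆ ℙ¹(E)` when it is spanned by a nonzero
vector with both coordinates in `F`. -/
def IsFLine (F E : Type*) [Field F] [Field E] [Algebra F E]
    (W : ProjLine E) : Prop :=
  ∃ v : Fin 2 → F, v ≠ 0 ∧
    W.1 = Submodule.span E {fun i => algebraMap F E (v i)}

/-- The line of `E²` spanned by `(x, 1)`: the point of `ℙ¹(E)` with affine coordinate `x`. -/
def affLine {E : Type*} [Field E] (x : E) : ProjLine E :=
  ⟨Submodule.span E {![x, 1]}, finrank_span_singleton (by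
    intro h
    simpa using congrFun h 1)⟩

theorem affLine_injective {E : Type*} [Field E] :
    Function.Injective (affLine : E → ProjLine E) := by
  intro x y h
  have h1 : (![x, 1] : Fin 2 → E) ∈ Submodule.span E {(![y, 1] : Fin 2 → E)} := by
    have h2 : Submodule.span E {(![x, 1] : Fin 2 → E)} = Submodule.span E {![y, 1]} :=
      congrArg Subtype.val h
    rw [← h2]
    exact Submodule.mem_span_singleton_self _
  obtain ⟨c, hc⟩ := Submodule.mem_span_singleton.1 h1
  have e0 := congrFun hc 0
  have e1 := congrFun hc 1
  simp at e0 e1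
  subst e1
  simpa using e0.symm

theorem span_eq_affLine {E : Type*} [Field E] (v : Fin 2 → E) (hv : v 1 ≠ 0) :
    Submodule.span E {v} = (affLine (v 0 / v 1)).1 := by
  have h : v = v 1 • ![v 0 / v 1, 1] := by
    ext i
    fin_cases i
    · simp [mul_div_cancel₀ _ hv]
    · simp
  conv_lhs => rw [h]
  exact Submodule.span_singleton_smul_eq (IsUnit.mk0 _ hv) _

theorem isFLine_affLine_iff (F : Type*) {E : Type*} [Field F] [Field E] [Algebra F E] (x : E) :
    IsFLine F E (affLine x) ↔ x ∈ Set.range (algebraMap F E) := by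
  constructor
  · rintro ⟨v, hv, h⟩
    have h1 : (![x, 1] : Fin 2 → E) ∈ Submodule.span E {fun i => algebraMap F E (v i)} := by
      rw [← h]
      exact Submodule.mem_span_singleton_self _
    obtain ⟨c, hc⟩ := Submodule.mem_span_singleton.1 h1
    have e0 := congrFun hc 0
    have e1 := congrFun hc 1
    simp at e0 e1
    refine ⟨v 0 / v 1, ?_⟩
    have h2 : algebraMap F E (v 1) ≠ 0 := right_ne_zero_of_mul_eq_one e1
    rw [map_div₀, div_eq_iff h2, ← e0, mul_right_comm, e1, one_mul]
  · rintro ⟨r, rfl⟩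
    refine ⟨![r, 1], fun h => by simpa using congrFun h 1, ?_⟩
    change Submodule.span E {_} = _
    congr 2
    ext i
    fin_cases i <;> simp

theorem not_isFLine_iff (F : Type*) {E : Type*} [Field F] [Field E] [Algebra F E]
    (W : ProjLine E) :
    ¬ IsFLine F E W ↔ ∃ x : E, x ∉ Set.range (algebraMap F E) ∧ affLine x = W := by
  constructor
  · intro hW
    obtain ⟨v, hvW, hv, hspan⟩ : ∃ v ∈ W.1, v ≠ 0 ∧ W.1 = Submodule.span E {v} := by
      obtain ⟨w, hw, hw'⟩ := finrank_eq_one_iff'.1 W.2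
      refine ⟨w, w.2, by simpa using hw, le_antisymm ?_ ?_⟩
      · intro u hu
        obtain ⟨c, hc⟩ := hw' ⟨u, hu⟩
        exact Submodule.mem_span_singleton.2 ⟨c, congrArg Subtype.val hc⟩
      · simp
    by_cases h1 : v 1 = 0
    · -- the point at infinity is spanned by `(1, 0)`, hence lies in `ℙ¹(F)`
      have h0 : v 0 ≠ 0 := by
        intro h0
        apply hv
        ext i
        fin_cases i <;> simp [h0, h1]
      refine absurd ⟨![1, 0], fun h => by simpa using congrFun h 0, ?_⟩ hW
      have h : v = v 0 • (fun i => algebraMap F E ((![1, 0] : Fin 2 → F) i)) := by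
        ext i
        fin_cases i <;> simp [h1]
      rw [hspan]
      conv_lhs => rw [h]
      exact Submodule.span_singleton_smul_eq (IsUnit.mk0 _ h0) _
    · have h : affLine (v 0 / v 1) = W :=
        Subtype.ext (by rw [hspan, span_eq_affLine v h1])
      refine ⟨_, fun hx => hW ?_, h⟩
      rw [← h]
      exact (isFLine_affLine_iff F _).2 hx
  · rintro ⟨x, hx, rfl⟩
    rwa [isFLine_affLine_iff]

/-- If `x ∉ F`, then `1` and `x` are linearly independent over `F`. -/
theorem eq_zero_of_mul_add_eq_zero {F E : Type*} [Field F] [Field E] [Algebra F E] {x : E}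
    (hx : x ∉ Set.range (algebraMap F E)) {c d : F}
    (h : algebraMap F E c * x + algebraMap F E d = 0) : c = 0 ∧ d = 0 := by
  have hc : c = 0 := by
    by_contra hc
    have hc' : algebraMap F E c ≠ 0 := by simpa using hc
    refine hx ⟨-d / c, ?_⟩
    rw [map_div₀, div_eq_iff hc', map_neg]
    linear_combination -h
  subst hc
  exact ⟨rfl, by simpa using h⟩

/-- If `[E : F] = 2` and `x₀ ∉ F`, then `1` and `x₀` span `E` over `F`. -/
theorem exists_eq_mul_add {F E : Type*} [Field F] [Field E] [Algebra F E]
    (hNE : Module.finrank F E = 2) {x₀ : E} (hx : x₀ ∉ Set.range (algebraMap F E)) (y : E) :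
    ∃ a b : F, y = algebraMap F E a * x₀ + algebraMap F E b := by
  have hli : LinearIndependent F ![x₀, 1] := by
    rw [LinearIndependent.pair_iff]
    intro s t h
    apply eq_zero_of_mul_add_eq_zero hx
    simpa [Algebra.smul_def] using h
  have htop := hli.span_eq_top_of_card_eq_finrank (by simp [hNE])
  have hy : y ∈ Submodule.span F (Set.range ![x₀, 1]) := htop ▸ Submodule.mem_top
  rw [Matrix.range_cons, Matrix.range_cons, Matrix.range_empty, Set.union_empty,
    Set.singleton_union, Submodule.mem_span_pair] at hy
  obtain ⟨a, b, h⟩ := hy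
  exact ⟨a, b, by simpa [Algebra.smul_def] using h.symm⟩

theorem matActs_affLine {F E : Type*} [Field F] [Field E] [Algebra F E]
    (A : Matrix (Fin 2) (Fin 2) F) (x : E)
    (hx : algebraMap F E (A 1 0) * x + algebraMap F E (A 1 1) ≠ 0) :
    matActs (A.map (algebraMap F E)) (affLine x).1 =
      (affLine ((algebraMap F E (A 0 0) * x + algebraMap F E (A 0 1)) /
        (algebraMap F E (A 1 0) * x + algebraMap F E (A 1 1)))).1 := by
  have h := span_eq_affLine
    ![algebraMap F E (A 0 0) * x + algebraMap F E (A 0 1),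
      algebraMap F E (A 1 0) * x + algebraMap F E (A 1 1)] (by simpa using hx)
  simp only [Matrix.cons_val_zero, Matrix.cons_val_one] at h
  rw [← h, matActs, affLine, Submodule.map_span, Set.image_singleton]
  congr 2
  ext i
  fin_cases i <;> simp [Matrix.mulVec, dotProduct, Fin.sum_univ_two]

theorem stmt_9 (F E : Type*) [Field F] [Fintype F] [Field E] [Algebra F E]
    (q : ℕ) (hq : q = Fintype.card F)
    (hNE : Module.finrank F E = 2) :
    (∃ W₀ : ProjLine E, ¬ IsFLine F E W₀ ∧
      {W : ProjLine E | ¬ IsFLine F E W}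
        = {W : ProjLine E | ∃ g : GL (Fin 2) F,
            matActs ((g : Matrix (Fin 2) (Fin 2) F).map (algebraMap F E)) W₀.1
              = W.1}) ∧
    Nat.card {W : ProjLine E | ¬ IsFLine F E W} = q * (q - 1) := by
  have hfin : Module.Finite F E := Module.finite_of_finrank_pos (by omega)
  have hfinE : Finite E := Module.finite_of_finite F
  have hE : Nat.card E = q ^ 2 := by
    rw [Module.natCard_eq_pow_finrank (K := F), hNE, hq, Nat.card_eq_fintype_card]
  have hq1 : 1 < q := hq ▸ Fintype.one_lt_card
  have himage : {W : ProjLine E | ¬ IsFLine F E W}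
      = affLine '' (Set.range (algebraMap F E))ᶜ := by
    ext W
    exact not_isFLine_iff F W
  have hcompl : (Set.range (algebraMap F E))ᶜ.ncard = q * (q - 1) := by
    have h := Set.ncard_add_ncard_compl (Set.range (algebraMap F E))
    rw [hE, ← Set.image_univ, Set.ncard_image_of_injective _ (algebraMap F E).injective,
      Set.ncard_univ, Nat.card_eq_fintype_card, ← hq, Set.image_univ] at h
    rw [Nat.mul_sub, mul_one, ← sq]
    omega
  refine ⟨?_, ?_⟩
  · obtain ⟨x₀, hx₀⟩ : (Set.range (algebraMap F E))ᶜ.Nonempty := by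
      apply Set.nonempty_of_ncard_ne_zero
      rw [hcompl]
      exact Nat.mul_ne_zero (by omega) (by omega)
    refine ⟨affLine x₀, (not_isFLine_iff F _).2 ⟨x₀, hx₀, rfl⟩, ?_⟩
    ext W
    simp only [Set.mem_ofPred_eq]
    constructor
    · intro hW
      obtain ⟨x, hx, rfl⟩ := (not_isFLine_iff F W).1 hW
      obtain ⟨a, b, hab⟩ := exists_eq_mul_add hNE hx₀ x
      have ha : a ≠ 0 := by
        rintro rfl
        exact hx ⟨b, by simp [hab]⟩
      refine ⟨Matrix.GeneralLinearGroup.mkOfDetNeZero !![a, b; 0, 1]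
        (by simpa [Matrix.det_fin_two] using ha), ?_⟩
      change matActs ((!![a, b; 0, 1] : Matrix (Fin 2) (Fin 2) F).map (algebraMap F E)) _ = _
      rw [matActs_affLine _ _ (by simp)]
      simp [hab]
    · rintro ⟨g, hg⟩
      have hdet : (g : Matrix (Fin 2) (Fin 2) F).det ≠ 0 := g.det_ne_zero
      generalize (g : Matrix (Fin 2) (Fin 2) F) = A at hg hdet
      rw [Matrix.det_fin_two] at hdet
      have hden : algebraMap F E (A 1 0) * x₀ + algebraMap F E (A 1 1) ≠ 0 := by
        intro h
        obtain ⟨h0, h1⟩ := eq_zero_of_mul_add_eq_zero hx₀ h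
        simp [h0, h1] at hdet
      rw [matActs_affLine A x₀ hden] at hg
      refine (not_isFLine_iff F W).2 ⟨_, ?_, Subtype.ext hg⟩
      -- a value `r ∈ F` would make the first row of `A` equal to `r` times the second
      rintro ⟨r, hr⟩
      rw [eq_div_iff hden] at hr
      obtain ⟨h0, h1⟩ := eq_zero_of_mul_add_eq_zero hx₀
        (c := A 0 0 - r * A 1 0) (d := A 0 1 - r * A 1 1) (by
          simp only [map_sub, map_mul]
          linear_combination -hr)
      apply hdet
      linear_combination A 1 1 * h0 - A 1 0 * h1
  · rw [himage, Nat.card_coe_set_eq, Set.ncard_image_of_injective _ affLine_injective, hcompl]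
end

section
/- Let x ∈ E be an element whose degree over F is strictly greater than 2 (i.e., the minimal polynomial of x over F has degree ≥ 3). If g ∈ GL₂(F) fixes the line E·(x, 1) ⊆ E² (that is, the entrywise image of g in GL₂(E) maps this line to itself), then g is a scalar matrix. -/
/-!
If `g = !![a, b; c, d]` fixes the line through `(x, 1)`, then `(a x + b, c x + d) = μ (x, 1)` for
some `μ`, and eliminating `μ` gives `c x² + (d - a) x - b = 0`. Since `x` has degree at least `3`
over `F`, this polynomial of degree at most `2` vanishes identically, so `b = c = 0` and `a = d`.
-/

open Matrix

theorem stmt_10 (F E : Type*) [Field F] [Fintype F] [Field E] [Algebra F E]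
    [FiniteDimensional F E]
    (x : E) (hx : 3 ≤ (minpoly F x).natDegree)
    (g : GL (Fin 2) F)
    (hfix : (Submodule.span E {![x, (1 : E)]}).map
        (Matrix.toLin' ((g : Matrix (Fin 2) (Fin 2) F).map (algebraMap F E)))
      = Submodule.span E {![x, (1 : E)]}) :
    ∃ c : F, c ≠ 0 ∧
      (g : Matrix (Fin 2) (Fin 2) F) = c • (1 : Matrix (Fin 2) (Fin 2) F) := by
  have hdet : (g : Matrix (Fin 2) (Fin 2) F).det ≠ 0 :=
    ((Matrix.isUnit_iff_isUnit_det _).1 g.isUnit).ne_zero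
  generalize (g : Matrix (Fin 2) (Fin 2) F) = M at hfix hdet ⊢
  have hmem : Matrix.toLin' (M.map (algebraMap F E)) ![x, 1] ∈
      Submodule.span E {![x, (1 : E)]} := by
    rw [← hfix]
    exact Submodule.mem_map_of_mem (Submodule.mem_span_singleton_self _)
  obtain ⟨μ, hμ⟩ := Submodule.mem_span_singleton.1 hmem
  have h0 : μ * x = algebraMap F E (M 0 0) * x + algebraMap F E (M 0 1) := by
    simpa [Matrix.mulVec, dotProduct, Fin.sum_univ_two] using congrFun hμ 0
  have h1 : μ = algebraMap F E (M 1 0) * x + algebraMap F E (M 1 1) := by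
    simpa [Matrix.mulVec, dotProduct, Fin.sum_univ_two] using congrFun hμ 1
  let p : Polynomial F := .C (M 1 0) * .X ^ 2 + .C (M 1 1 - M 0 0) * .X + .C (-M 0 1)
  have hp : Polynomial.aeval x p = 0 := by
    simp only [p, map_add, map_mul, map_pow, Polynomial.aeval_C, Polynomial.aeval_X, map_sub,
      map_neg]
    linear_combination h0 - x * h1
  have hp0 : p = 0 := by
    by_contra hne
    have h2 : p.natDegree ≤ 2 := Polynomial.natDegree_quadratic_le
    have h3 := Polynomial.natDegree_le_of_dvd (minpoly.dvd F x hp) hne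
    omega
  have hc : M 1 0 = 0 := by
    simpa [p, Polynomial.coeff_X, Polynomial.coeff_C] using congrArg (Polynomial.coeff · 2) hp0
  have had : M 1 1 - M 0 0 = 0 := by
    simpa [p, Polynomial.coeff_X, Polynomial.coeff_C, -map_sub] using
      congrArg (Polynomial.coeff · 1) hp0
  have hb : M 0 1 = 0 := by
    simpa [p] using congrArg (Polynomial.coeff · 0) hp0
  refine ⟨M 0 0, fun ha => hdet ?_, ?_⟩
  · simp [Matrix.det_fin_two, ha, hc]
  · ext i j
    fin_cases i <;> fin_cases j <;> simp [hb, hc, sub_eq_zero.1 had]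
end

section
/- Let F be a finite field, let K = F(t) be the field of rational functions over F, and let R = M₂(F[t]) ⊆ M₂(K) be the subring of 2 × 2 matrices with polynomial entries. If M ∈ GL₂(K) satisfies M R M⁻¹ = R, then there exist a nonzero c ∈ K and a matrix U ∈ M₂(F[t]) with det U ∈ F^× such that M = c·U. In other words, the normalizer of M₂(F[t]) in GL₂(F(t)) is K^× · GL₂(F[t]). -/
/-!
Conjugating the matrix unit `E i j` by `M` gives the matrix with entries `M k i * M⁻¹ j l`, and the
entries of `M⁻¹` are, up to sign and order, those of `M` divided by `det M`. Hence `det M` divides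
every product of two entries of `M`, with quotient in `F[t]`
(`mul_entries_eq_det_mul`). Since `F[t]` is a principal ideal domain, `M = c • U` where the entries
of `U` are polynomials generating the unit ideal (`exists_smul_primitive`). The factor `c ^ 2`
cancels, so `det U` divides every product of two entries of `U`; these products also generate the
unit ideal, so `det U` is a unit.
-/

open Matrix

set_option synthInstance.maxHeartbeats 400000

/-- A nonzero finite family in the fraction field of a PID is a nonzero scalar times
an integral family whose members satisfy a Bézout identity. -/
theorem exists_smul_primitive {A K n : Type*} [CommRing A] [IsDomain A] [IsPrincipalIdealRing A]
    [Field K] [Algebra A K] [IsFractionRing A K] [Fintype n] (m : n → K) (hm : m ≠ 0) :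
    ∃ c : K, c ≠ 0 ∧ ∃ u r : n → A, ∑ a, r a * u a = 1 ∧ ∀ a, m a = c * algebraMap A K (u a) := by
  classical
  obtain ⟨b, hb⟩ := IsLocalization.exist_integer_multiples_of_finite (nonZeroDivisors A) m
  choose N hN using hb
  have hb0 : algebraMap A K b ≠ 0 :=
    IsFractionRing.to_map_ne_zero_of_mem_nonZeroDivisors b.2
  have hN' : ∀ a, algebraMap A K (N a) = algebraMap A K b * m a := fun a => by
    rw [hN a, Algebra.smul_def]
  obtain ⟨g, hg⟩ := (IsPrincipalIdealRing.principal (Ideal.span (Set.range N))).principal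
  have hgmem : g ∈ Ideal.span (Set.range N) := by
    rw [hg]; exact Submodule.mem_span_singleton_self g
  have hdvd : ∀ a, ∃ u, N a = g * u := fun a => by
    have h : N a ∈ Ideal.span (Set.range N) := Ideal.subset_span ⟨a, rfl⟩
    rw [hg] at h
    exact Ideal.mem_span_singleton.mp h
  choose u hu using hdvd
  have hg0 : g ≠ 0 := by
    rintro rfl
    apply hm
    funext a
    have h := hN' a
    rw [hu a, zero_mul, map_zero] at h
    exact (mul_eq_zero.mp h.symm).resolve_left hb0
  obtain ⟨r, hr⟩ := (Ideal.mem_span_range_iff_exists_fun).mp hgmem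
  have hg0' : algebraMap A K g ≠ 0 := by
    simpa using hg0
  refine ⟨algebraMap A K g / algebraMap A K b, div_ne_zero hg0' hb0, u, r, ?_, fun a => ?_⟩
  · apply mul_left_cancel₀ hg0
    rw [Finset.mul_sum, mul_one]
    conv_rhs => rw [← hr]
    refine Finset.sum_congr rfl fun a _ => ?_
    rw [hu a]; ring
  · have h := hN' a
    rw [hu a, map_mul] at h
    field_simp
    rw [h]; ring

/-- The `(k, l)` entry of `M * E i j * M⁻¹` is `M k i * M⁻¹ j l`; in size two every entry of `M` is, up
to sign, `det M` times an entry of `M⁻¹`. -/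
theorem mul_entries_eq_det_mul {K : Type*} [Field K] (S : Subring K) (M : GL (Fin 2) K)
    (h : ∀ i j k l : Fin 2, ((M : Matrix (Fin 2) (Fin 2) K) * Matrix.single i j (1 : K) *
      ((M⁻¹ : GL (Fin 2) K) : Matrix (Fin 2) (Fin 2) K)) k l ∈ S) (i j k l : Fin 2) :
    ∃ q ∈ S, (M : Matrix (Fin 2) (Fin 2) K) k i * (M : Matrix (Fin 2) (Fin 2) K) j l
      = (M : Matrix (Fin 2) (Fin 2) K).det * q := by
  have hdet : (M : Matrix (Fin 2) (Fin 2) K).det ≠ 0 :=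
    ((Matrix.isUnit_iff_isUnit_det _).mp M.isUnit).ne_zero
  have hprod : ∀ i j k l, (M : Matrix (Fin 2) (Fin 2) K) k i *
      ((M : Matrix (Fin 2) (Fin 2) K).det⁻¹ *
        (M : Matrix (Fin 2) (Fin 2) K).adjugate j l) ∈ S := fun i j k l => by
    have := h i j k l
    rw [Matrix.coe_units_inv, Matrix.inv_def, Ring.inverse_eq_inv'] at this
    simpa [Matrix.mul_apply, Matrix.single_apply, Fin.sum_univ_two, Matrix.smul_apply,
      ite_and] using this
  generalize (M : Matrix (Fin 2) (Fin 2) K) = N at *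
  refine ⟨N k i * (N.det⁻¹ * N j l), ?_, by field_simp⟩
  have hneg : ∀ x y z : K, x * (y * -z) ∈ S → x * (y * z) ∈ S := fun x y z hx => by
    have := S.neg_mem hx
    rwa [mul_neg, mul_neg, neg_neg] at this
  have h00 := hprod i 0 k 0
  have h01 := hprod i 0 k 1
  have h10 := hprod i 1 k 0
  have h11 := hprod i 1 k 1
  simp only [Matrix.adjugate_fin_two, Matrix.of_apply, Matrix.cons_val', Matrix.cons_val_zero,
    Matrix.cons_val_one, Matrix.cons_val_fin_one] at h00 h01 h10 h11
  fin_cases j <;> fin_cases l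
  · exact h11
  · exact hneg _ _ _ h01
  · exact hneg _ _ _ h10
  · exact h00

theorem stmt_11 (F : Type*) [Field F] [Fintype F]
    (M : GL (Fin 2) (RatFunc F))
    (hstab : ∀ A : Matrix (Fin 2) (Fin 2) (RatFunc F),
      (∀ i j, A i j ∈ (algebraMap (Polynomial F) (RatFunc F)).range) →
        (∀ i j,
          ((M : Matrix (Fin 2) (Fin 2) (RatFunc F)) * A *
              ((M⁻¹ : GL (Fin 2) (RatFunc F)) : Matrix (Fin 2) (Fin 2) (RatFunc F))) i j
            ∈ (algebraMap (Polynomial F) (RatFunc F)).range) ∧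
        (∀ i j,
          (((M⁻¹ : GL (Fin 2) (RatFunc F)) : Matrix (Fin 2) (Fin 2) (RatFunc F)) * A *
              (M : Matrix (Fin 2) (Fin 2) (RatFunc F))) i j
            ∈ (algebraMap (Polynomial F) (RatFunc F)).range)) :
    ∃ c : RatFunc F, c ≠ 0 ∧
      ∃ U : Matrix (Fin 2) (Fin 2) (Polynomial F),
        (∃ u : F, u ≠ 0 ∧ U.det = Polynomial.C u) ∧
        (M : Matrix (Fin 2) (Fin 2) (RatFunc F))
          = c • (U.map (algebraMap (Polynomial F) (RatFunc F)) : Matrix (Fin 2) (Fin 2) (RatFunc F)) := by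
  have hdet : (M : Matrix (Fin 2) (Fin 2) (RatFunc F)).det ≠ 0 :=
    ((Matrix.isUnit_iff_isUnit_det _).mp M.isUnit).ne_zero
  have hm : (fun a : Fin 2 × Fin 2 => (M : Matrix (Fin 2) (Fin 2) (RatFunc F)) a.1 a.2) ≠ 0 := by
    intro h
    apply hdet
    have h' : ∀ i j, (M : Matrix (Fin 2) (Fin 2) (RatFunc F)) i j = 0 :=
      fun i j => congrFun h (i, j)
    simp [Matrix.det_fin_two, h']
  obtain ⟨c, hc, u, r, hbez, hu⟩ := exists_smul_primitive (A := Polynomial F) _ hm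
  have hMU : (M : Matrix (Fin 2) (Fin 2) (RatFunc F)) =
      c • (Matrix.of fun i j => u (i, j)).map (algebraMap (Polynomial F) (RatFunc F)) := by
    ext i j
    simpa using hu (i, j)
  refine ⟨c, hc, Matrix.of fun i j => u (i, j), ?_, hMU⟩
  have hdetU : (M : Matrix (Fin 2) (Fin 2) (RatFunc F)).det = c ^ 2 *
      algebraMap (Polynomial F) (RatFunc F) (Matrix.of fun i j => u (i, j)).det := by
    rw [hMU, Matrix.det_smul, Fintype.card_fin, RingHom.map_det]
    rfl
  generalize (Matrix.of fun i j => u (i, j)).det = d at hdetU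
  have hdvd : ∀ a b, d ∣ u a * u b := by
    rintro ⟨k, i⟩ ⟨j, l⟩
    obtain ⟨_, ⟨q, rfl⟩, hq⟩ := mul_entries_eq_det_mul
      (algebraMap (Polynomial F) (RatFunc F)).range M
      (fun i j => (hstab (Matrix.single i j 1) fun i' j' => by
        rw [Matrix.single_apply]
        split_ifs
        · exact one_mem _
        · exact zero_mem _).1) i j k l
    refine ⟨q, RatFunc.algebraMap_injective F ?_⟩
    have h1 := hu (k, i)
    have h2 := hu (j, l)
    simp only at h1 h2
    rw [h1, h2, hdetU] at hq
    apply mul_left_cancel₀ (pow_ne_zero 2 hc)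
    rw [map_mul, map_mul]
    linear_combination hq
  -- Multiplying the Bézout identity by `u b` removes one factor; a second use leaves `d ∣ 1`.
  have hdvd' : ∀ b, d ∣ u b := fun b => by
    rw [← one_mul (u b), ← hbez, Finset.sum_mul]
    refine Finset.dvd_sum fun a _ => ?_
    rw [mul_assoc]
    exact (hdvd a b).mul_left _
  have hunit : IsUnit d := by
    rw [isUnit_iff_dvd_one, ← hbez]
    exact Finset.dvd_sum fun a _ => (hdvd' a).mul_left _
  obtain ⟨x, hx, hxd⟩ := Polynomial.isUnit_iff.mp hunit
  exact ⟨x, hx.ne_zero, hxd.symm⟩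
end
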